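/- arXiv:0801.4432 — 4 statements merged into one kernel-verified Lean document; each statement's English description precedes it below -/
import Mathlib

section
/- Let P ⊂ ℝⁿ be an integral polytope of dimension d. Then there exists a polynomial L_P of degree exactly d such that L_P(t) = #(t·P ∩ ℤⁿ) for all integers t ≥ 1 (Ehrhart's theorem). -/
open Pointwise

/-- Number of lattice points of a subset of `ℝⁿ`. -/
noncomputable def latticeCount {n : ℕ} (S : Set (Fin n → ℝ)) : ℕ :=
  Set.ncard {x ∈ S | ∀ i, ∃ m : ℤ, x i = m}

namespace Ehr

open Finset

/-- The first nonzero coordinate is positive. -/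
def LexPos {m : ℕ} (a : Fin m → ℝ) : Prop := ∃ i, (∀ j < i, a j = 0) ∧ 0 < a i

lemma LexPos.not_neg {m : ℕ} {a : Fin m → ℝ} (h : LexPos a) (h' : LexPos (-a)) : False := by
  obtain ⟨i, hi, hp⟩ := h
  obtain ⟨j, hj, hq⟩ := h'
  simp only [Pi.neg_apply, neg_eq_zero] at hj hq
  rcases lt_trichotomy i j with hl | rfl | hl
  · have := hj i hl; linarith
  · linarith
  · have := hi j hl; linarith

lemma exists_first {m : ℕ} {a : Fin m → ℝ} (h : a ≠ 0) : ∃ i, (∀ j < i, a j = 0) ∧ a i ≠ 0 := by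
  have hne : (univ.filter (fun i => a i ≠ 0)).Nonempty := by
    obtain ⟨i, hi⟩ := Function.ne_iff.1 h
    exact ⟨i, by simpa using hi⟩
  refine ⟨_, ?_, (mem_filter.1 (min'_mem _ hne)).2⟩
  intro j hj
  by_contra hc
  exact absurd (min'_le _ j (by simpa using hc)) (not_le.2 hj)

lemma lexPos_or {m : ℕ} {a : Fin m → ℝ} (h : a ≠ 0) : LexPos a ∨ LexPos (-a) := by
  obtain ⟨i, hi, hn⟩ := exists_first h
  rcases lt_or_gt_of_ne hn with h1 | h1
  · right; exact ⟨i, fun j hj => by simp [hi j hj], by simpa using h1⟩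
  · left; exact ⟨i, hi, h1⟩

lemma exists_lexmin {m : ℕ} {K : Set (Fin m → ℝ)} (hK : IsCompact K) (hne : K.Nonempty) :
    ∃ b ∈ K, ∀ c ∈ K, c ≠ b → LexPos (c - b) := by
  have key : ∀ k : ℕ, ∃ K' ⊆ K, IsCompact K' ∧ K'.Nonempty ∧ ∀ b ∈ K', ∀ c ∈ K,
      (c ∉ K' → LexPos (c - b)) ∧ (c ∈ K' → ∀ i : Fin m, i.1 < k → c i = b i) := by
    intro k
    induction k with
    | zero => exact ⟨K, subset_rfl, hK, hne, fun b _ c hc => ⟨fun h => absurd hc h, by simp⟩⟩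
    | succ k ih =>
      obtain ⟨K', hs, hc', hn', h⟩ := ih
      by_cases hk : k < m
      · obtain ⟨b0, hb0, hmin⟩ := hc'.exists_isMinOn hn'
          (f := fun b => b ⟨k, hk⟩) (by fun_prop)
        refine ⟨K' ∩ {b | b ⟨k, hk⟩ = b0 ⟨k, hk⟩}, fun x hx => hs hx.1,
          hc'.inter_right (isClosed_eq (by fun_prop) (by fun_prop)), ⟨b0, hb0, rfl⟩, ?_⟩
        rintro b ⟨hb, hbe⟩ c hc
        have hbe : b ⟨k, hk⟩ = b0 ⟨k, hk⟩ := hbe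
        refine ⟨fun hn => ?_, ?_⟩
        · by_cases hcK : c ∈ K'
          · refine ⟨⟨k, hk⟩, fun j hj => ?_, ?_⟩
            · simp [(h b hb c hc).2 hcK j hj]
            · have h1 : b0 ⟨k, hk⟩ ≤ c ⟨k, hk⟩ := hmin hcK
              have h2 : c ⟨k, hk⟩ ≠ b0 ⟨k, hk⟩ := fun e => hn ⟨hcK, e⟩
              have := lt_of_le_of_ne h1 h2.symm
              simp only [Pi.sub_apply]; linarith
          · exact (h b hb c hc).1 hcK
        · rintro ⟨hcK, hce⟩ i hi
          have hce : c ⟨k, hk⟩ = b0 ⟨k, hk⟩ := hce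
          rcases Nat.lt_succ_iff_lt_or_eq.1 hi with hlt | heq
          · exact (h b hb c hc).2 hcK i hlt
          · have : i = ⟨k, hk⟩ := Fin.ext heq
            rw [this, hce, hbe]
      · refine ⟨K', hs, hc', hn', fun b hb c hc => ⟨(h b hb c hc).1, fun hcK i _ => ?_⟩⟩
        exact (h b hb c hc).2 hcK i (by have := i.2; omega)
  obtain ⟨K', hs, -, ⟨b, hb⟩, h⟩ := key m
  refine ⟨b, hs hb, fun c hc hcb => ?_⟩
  by_cases hcK : c ∈ K'
  · exact absurd (funext fun i => (h b hb c hc).2 hcK i i.2) hcb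
  · exact (h b hb c hc).1 hcK

/-- The evaluation map from coefficients to points. -/
noncomputable def T {m n : ℕ} (v : Fin m → Fin n → ℝ) : (Fin m → ℝ) →ₗ[ℝ] (Fin n → ℝ) :=
  Fintype.linearCombination ℝ v

lemma T_apply {m n : ℕ} (v : Fin m → Fin n → ℝ) (b : Fin m → ℝ) :
    T v b = ∑ i, b i • v i := by simp [T, Fintype.linearCombination_apply]

/-- Good supports: every affine relation feasible from this support is lex-positive. -/
def Good {m n : ℕ} (v : Fin m → Fin n → ℝ) (S : Finset (Fin m)) : Prop :=
  ∀ a : Fin m → ℝ, ∑ i, a i = 0 → T v a = 0 → (∀ i ∉ S, 0 ≤ a i) → a ≠ 0 → LexPos a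

/-- support -/
noncomputable def supp {m : ℕ} (b : Fin m → ℝ) : Finset (Fin m) := univ.filter (fun i => b i ≠ 0)

lemma mem_supp {m : ℕ} {b : Fin m → ℝ} {i : Fin m} : i ∈ supp b ↔ b i ≠ 0 := by simp [supp]

lemma good_unique {m n : ℕ} {v : Fin m → Fin n → ℝ} {b c : Fin m → ℝ}
    (hb : ∀ i, 0 ≤ b i) (hc : ∀ i, 0 ≤ c i) (hgb : Good v (supp b)) (hgc : Good v (supp c))
    (hs : ∑ i, b i = ∑ i, c i) (hT : T v b = T v c) : b = c := by
  by_contra hne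
  have aux : ∀ b c : Fin m → ℝ, (∀ i, 0 ≤ c i) → Good v (supp b) →
      ∑ i, b i = ∑ i, c i → T v b = T v c → b ≠ c → LexPos (c - b) := by
    intro b c hc hgb hs hT hne
    refine hgb _ (by simp [hs]) (by simp [hT]) (fun i hi => ?_) (sub_ne_zero.2 hne.symm)
    have : b i = 0 := by simpa [mem_supp] using hi
    simp [this, hc i]
  have h1 := aux b c hc hgb hs hT hne
  have h2 := aux c b hb hgc hs.symm hT.symm (Ne.symm hne)
  refine h1.not_neg ?_
  simpa using h2

lemma good_exists {m n : ℕ} {v : Fin m → Fin n → ℝ} {b : Fin m → ℝ}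
    (hb : ∀ i, 0 ≤ b i) : ∃ c : Fin m → ℝ, (∀ i, 0 ≤ c i) ∧ ∑ i, c i = ∑ i, b i ∧
      T v c = T v b ∧ Good v (supp c) := by
  let K : Set (Fin m → ℝ) := {c | (∀ i, 0 ≤ c i) ∧ ∑ i, c i = ∑ i, b i ∧ T v c = T v b}
  have hKsub : K ⊆ Set.Icc 0 (fun _ => ∑ i, b i) := by
    rintro c ⟨h0, h1, -⟩
    refine ⟨fun i => h0 i, fun i => ?_⟩
    show c i ≤ ∑ i, b i
    rw [← h1]
    exact single_le_sum (fun j _ => h0 j) (mem_univ i)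
  have hKcl : IsClosed K := by
    have e : K = (⋂ i, {c | 0 ≤ c i}) ∩ ({c | ∑ i, c i = ∑ i, b i} ∩ {c | T v c = T v b}) := by
      ext c; simp [K]
    rw [e]
    refine (isClosed_iInter fun i => isClosed_le (by fun_prop) (by fun_prop)).inter
      ((isClosed_eq (by fun_prop) (by fun_prop)).inter (isClosed_eq ?_ (by fun_prop)))
    exact (T v).continuous_of_finiteDimensional
  have hKc : IsCompact K := isCompact_Icc.of_isClosed_subset hKcl hKsub
  obtain ⟨c, ⟨hc0, hc1, hc2⟩, hmin⟩ := exists_lexmin hKc ⟨b, hb, rfl, rfl⟩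
  refine ⟨c, hc0, hc1, hc2, fun a ha0 haT hai hane => ?_⟩
  have hε : ∃ ε > 0, ∀ i, 0 ≤ c i + ε * a i := by
    have : ∀ i, ∀ᶠ ε : ℝ in nhdsWithin 0 (Set.Ioi 0), 0 ≤ c i + ε * a i := by
      intro i
      by_cases hi : c i = 0
      · have := hai i (by simp [mem_supp, hi])
        filter_upwards [self_mem_nhdsWithin] with ε hε
        have hε : 0 < ε := hε
        rw [hi]; positivity
      · have hpos : 0 < c i := lt_of_le_of_ne (hc0 i) (Ne.symm hi)
        have hcont : Filter.Tendsto (fun ε : ℝ => c i + ε * a i) (nhds 0) (nhds (c i + 0 * a i)) :=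
          Continuous.tendsto (by fun_prop) 0
        have := hcont.eventually (lt_mem_nhds (a := 0) (by simpa using hpos))
        exact (this.filter_mono nhdsWithin_le_nhds).mono fun x hx => hx.le
    obtain ⟨ε, h1, h2⟩ := ((Filter.eventually_all.2 this).and self_mem_nhdsWithin).exists
    exact ⟨ε, h2, h1⟩
  obtain ⟨ε, hεp, hε⟩ := hε
  have hmem : c + ε • a ∈ K := ⟨fun i => by simpa using hε i, by
    simp [sum_add_distrib, ← mul_sum, ha0, hc1], by simp [haT, hc2]⟩
  have hne : c + ε • a ≠ c := by simpa [hεp.ne'] using hane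
  obtain ⟨i, hi, hp⟩ := hmin _ hmem hne
  refine ⟨i, fun j hj => ?_, ?_⟩
  · simpa [hεp.ne'] using hi j hj
  · have : 0 < ε * a i := by simpa using hp
    exact (mul_pos_iff_of_pos_left hεp).1 this

lemma good_affineIndependent {m n : ℕ} {v : Fin m → Fin n → ℝ} {S : Finset (Fin m)}
    (hS : Good v S) : AffineIndependent ℝ (fun i : S => v i) := by
  rw [affineIndependent_iff_of_fintype]
  intro w hw0 hwv
  rw [Finset.weightedVSub_eq_linear_combination _ hw0] at hwv
  let a : Fin m → ℝ := fun i => if h : i ∈ S then w ⟨i, h⟩ else 0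
  have haS : ∀ i : S, a i = w i := fun i => by simp [a]
  have hsum : ∑ i, a i = 0 := by
    rw [← hw0, ← Finset.sum_subset (subset_univ S) (fun i _ hi => by simp [a, hi]),
      ← Finset.sum_coe_sort S]
    exact sum_congr rfl fun i _ => haS i
  have hT : T v a = 0 := by
    rw [T_apply, ← hwv, ← Finset.sum_subset (subset_univ S) (fun i _ hi => by simp [a, hi]),
      ← Finset.sum_coe_sort S (fun i => a i • v i)]
    exact sum_congr rfl fun i _ => by rw [haS i]
  have h0 : a = 0 := by
    by_contra hne
    refine (hS a hsum hT (fun i hi => by simp [a, hi]) hne).not_neg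
      (hS (-a) (by simp [hsum]) (by simp [hT]) (fun i hi => by simp [a, hi]) (neg_ne_zero.2 hne))
  intro i
  rw [← haS i, h0]; rfl

lemma good_card_le {m n : ℕ} {v : Fin m → Fin n → ℝ} {S : Finset (Fin m)}
    (hS : Good v S) : S.card ≤ Module.finrank ℝ (vectorSpan ℝ (Set.range v)) + 1 := by
  have h := (good_affineIndependent hS).card_le_finrank_succ
  rw [Fintype.card_coe] at h
  have h2 : vectorSpan ℝ (Set.range (fun i : S => v i)) ≤ vectorSpan ℝ (Set.range v) :=
    vectorSpan_mono ℝ (by rintro _ ⟨i, rfl⟩; exact ⟨i, rfl⟩)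
  have := Submodule.finrank_mono h2
  omega

lemma good_greedy {m n : ℕ} (v : Fin m → Fin n → ℝ) (hm : 0 < m) : ∃ S : Finset (Fin m),
    Good v S ∧ S.card = Module.finrank ℝ (vectorSpan ℝ (Set.range v)) + 1 := by
  classical
  let S : Finset (Fin m) := univ.filter fun i => v i ∉ affineSpan ℝ (v '' Set.Ioi i)
  have hgood : Good v S := by
    intro a ha0 haT hai hne
    obtain ⟨i, hi, hn⟩ := exists_first hne
    refine ⟨i, hi, lt_of_le_of_ne (hai i ?_) (Ne.symm hn)⟩
    simp only [S, mem_filter, mem_univ, true_and, not_not]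
    have split : ∀ {M : Type} [AddCommGroup M] (g : Fin m → M), (∀ j < i, g j = 0) →
        ∑ j, g j = g i + ∑ j ∈ Finset.Ioi i, g j := by
      intro M _ g hg
      rw [← Finset.sum_insert (by simp)]
      symm
      apply Finset.sum_subset (subset_univ _)
      intro j _ hj
      apply hg
      simp only [mem_insert, mem_Ioi, not_or, not_lt] at hj
      exact lt_of_le_of_ne hj.2 hj.1
    rw [split a hi] at ha0
    rw [T_apply, split _ (fun j hj => by simp [hi j hj])] at haT
    have hw1 : ∑ j ∈ Finset.Ioi i, (-(a i)⁻¹ * a j) = 1 := by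
      rw [← mul_sum, show ∑ j ∈ Finset.Ioi i, a j = - a i by linarith]
      field_simp
    have hmem := affineCombination_mem_affineSpan_image (k := ℝ) (s := Finset.Ioi i) hw1
      (s' := Set.Ioi i) (fun j hj hj' => by simp_all) v
    rw [Finset.affineCombination_eq_linear_combination _ _ _ hw1] at hmem
    convert hmem using 1
    simp only [mul_smul]
    rw [← smul_sum, ← eq_neg_of_add_eq_zero_right haT |>.symm]
    simp [smul_smul, hn]
  have hspan : ∀ k : ℕ, ∀ i : Fin m, m - i.1 ≤ k → v i ∈ affineSpan ℝ (v '' (S : Set (Fin m))) := by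
    intro k
    induction k with
    | zero => intro i hi; have := i.2; omega
    | succ k ih =>
      intro i hi
      by_cases hiS : i ∈ S
      · exact subset_affineSpan ℝ _ ⟨i, hiS, rfl⟩
      · simp only [S, mem_filter, mem_univ, true_and, not_not] at hiS
        refine (affineSpan_le.2 ?_) hiS
        rintro _ ⟨j, hj, rfl⟩
        have : i.1 < j.1 := hj
        exact ih j (by omega)
  have heq : affineSpan ℝ (v '' (S : Set (Fin m))) = affineSpan ℝ (Set.range v) := by
    refine le_antisymm (affineSpan_mono ℝ (Set.image_subset_range _ _)) (affineSpan_le.2 ?_)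
    rintro _ ⟨i, rfl⟩
    exact hspan _ i le_rfl
  have hne : Nonempty S := by
    by_contra hc
    have : S = ∅ := Finset.eq_empty_of_forall_notMem (by simpa using hc)
    have h := hspan _ ⟨0, hm⟩ le_rfl
    rw [this] at h
    simp only [coe_empty, Set.image_empty, AffineSubspace.span_empty] at h
    exact AffineSubspace.notMem_bot ℝ _ _ h
  refine ⟨S, hgood, ?_⟩
  have h := (good_affineIndependent hgood).finrank_vectorSpan_add_one
  rw [Fintype.card_coe] at h
  have hr : v '' (S : Set (Fin m)) = Set.range (fun i : S => v i) := by ext x; simp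
  rw [← h, ← direction_affineSpan, ← direction_affineSpan, ← heq, hr]

/-- Coefficient vectors of lattice points at level `t`. -/
def A {m n : ℕ} (v : Fin m → Fin n → ℝ) (t : ℕ) : Set (Fin m → ℝ) :=
  {b | (∀ i, 0 ≤ b i) ∧ ∑ i, b i = t ∧ (∀ k, ∃ z : ℤ, T v b k = z) ∧ Good v (supp b)}

lemma A_injOn {m n : ℕ} (v : Fin m → Fin n → ℝ) (t : ℕ) : Set.InjOn (T v) (A v t) := by
  rintro b ⟨h0, h1, h2, h3⟩ c ⟨g0, g1, g2, g3⟩ h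
  exact good_unique h0 g0 h3 g3 (h1.trans g1.symm) h

lemma A_finite {m n : ℕ} (v : Fin m → Fin n → ℝ) (t : ℕ) : (A v t).Finite := by
  let M : Fin n → ℝ := fun k => ∑ i, (t : ℝ) * |v i k|
  have hfin : ((fun (z : Fin n → ℤ) (k : Fin n) => (z k : ℝ)) ''
      Set.Icc (fun k => -⌈M k⌉) (fun k => ⌈M k⌉)).Finite := (Set.finite_Icc _ _).image _
  refine Set.Finite.of_injOn (f := T v) ?_ (A_injOn v t) hfin
  rintro b ⟨h0, h1, h2, h3⟩
  choose z hz using h2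
  have hb : ∀ k, |T v b k| ≤ M k := by
    intro k
    rw [T_apply, Finset.sum_apply]
    refine (Finset.abs_sum_le_sum_abs _ _).trans (Finset.sum_le_sum fun i _ => ?_)
    rw [Pi.smul_apply, smul_eq_mul, abs_mul, abs_of_nonneg (h0 i)]
    refine mul_le_mul_of_nonneg_right ?_ (abs_nonneg _)
    rw [← h1]
    exact single_le_sum (fun j _ => h0 j) (mem_univ i)
  refine ⟨z, ⟨fun k => ?_, fun k => ?_⟩, funext fun k => (hz k).symm⟩
  · have := (abs_le.1 (hb k)).1
    rw [hz k] at this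
    have h2 := Int.le_ceil (M k)
    have : -(⌈M k⌉ : ℝ) ≤ z k := by linarith
    exact_mod_cast this
  · have := (abs_le.1 (hb k)).2
    rw [hz k] at this
    have h2 := Int.le_ceil (M k)
    have : (z k : ℝ) ≤ ⌈M k⌉ := by linarith
    exact_mod_cast this

lemma hull_eq {m n : ℕ} (v : Fin m → Fin n → ℝ) :
    convexHull ℝ (Set.range v) = T v '' stdSimplex ℝ (Fin m) := by
  rw [← convexHull_rangle_single_eq_stdSimplex, LinearMap.image_convexHull, ← Set.range_comp]
  congr 2
  ext i k
  simp [T]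

lemma count_eq {m n : ℕ} (v : Fin m → Fin n → ℝ) (t : ℕ) (ht : 0 < t) :
    latticeCount ((t : ℝ) • convexHull ℝ (Set.range v)) = (A v t).ncard := by
  have htr : (0 : ℝ) < t := by exact_mod_cast ht
  rw [← (A_injOn v t).ncard_image, latticeCount]
  congr 1
  ext x
  rw [hull_eq]
  constructor
  · rintro ⟨⟨_, ⟨b, ⟨hb0, hb1⟩, rfl⟩, rfl⟩, hint⟩
    obtain ⟨c, hc0, hc1, hc2, hc3⟩ := good_exists (v := v) (b := (t : ℝ) • b)
      (fun i => mul_nonneg htr.le (hb0 i))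
    have hT : T v c = (t : ℝ) • T v b := by rw [hc2, map_smul]
    refine ⟨c, ⟨hc0, ?_, ?_, hc3⟩, hT⟩
    · rw [hc1]; simp [← mul_sum, hb1]
    · rw [hT]; exact hint
  · rintro ⟨b, ⟨h0, h1, h2, h3⟩, rfl⟩
    refine ⟨⟨_, ⟨(t : ℝ)⁻¹ • b, ⟨fun i => mul_nonneg (inv_nonneg.2 htr.le) (h0 i), ?_⟩, rfl⟩, ?_⟩, h2⟩
    · simp [← mul_sum, h1, htr.ne']
    · simp [smul_smul, htr.ne']

/-- Box points. -/
def B {m n : ℕ} (v : Fin m → Fin n → ℝ) : Set (Fin m → ℝ) :=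
  {f | (∃ h : ℕ, 1 ≤ h ∧ f ∈ A v h) ∧ ∀ i, f i ≤ 1}

/-- height -/
noncomputable def ht {m : ℕ} (f : Fin m → ℝ) : ℕ := ⌊∑ i, f i⌋₊

lemma B_spec {m n : ℕ} {v : Fin m → Fin n → ℝ} {f : Fin m → ℝ} (hf : f ∈ B v) :
    f ∈ A v (ht f) ∧ 1 ≤ ht f ∧ ht f ≤ (supp f).card := by
  obtain ⟨⟨h, h1, hA⟩, hle⟩ := hf
  have e : ht f = h := by rw [ht, hA.2.1]; simp
  rw [e]
  refine ⟨hA, h1, ?_⟩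
  have : (h : ℝ) ≤ (supp f).card := by
    rw [← hA.2.1, ← Finset.sum_subset (subset_univ (supp f))
      (fun i _ hi => by simpa [mem_supp] using hi)]
    calc ∑ i ∈ supp f, f i ≤ ∑ i ∈ supp f, (1 : ℝ) := sum_le_sum fun i _ => hle i
      _ = _ := by simp
  exact_mod_cast this

lemma B_finite {m n : ℕ} (v : Fin m → Fin n → ℝ) : (B v).Finite := by
  refine Set.Finite.subset (Set.Finite.biUnion (Set.finite_Iic m) (fun h _ => A_finite v h)) ?_
  intro f hf
  obtain ⟨h1, h2, h3⟩ := B_spec hf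
  refine Set.mem_biUnion (x := ht f) ?_ h1
  exact h3.trans ((card_le_univ _).trans (by simp))

lemma T_nat_int {m n : ℕ} {v : Fin m → Fin n → ℝ} (hv : ∀ i k, ∃ z : ℤ, v i k = z)
    (c : Fin m → ℕ) (k : Fin n) : ∃ z : ℤ, T v (fun i => (c i : ℝ)) k = z := by
  choose z hz using hv
  refine ⟨∑ i, c i * z i k, ?_⟩
  rw [T_apply]
  simp [hz]

open Classical in
/-- Fiber over a box point. -/
noncomputable def fib {m : ℕ} (t : ℕ) (f : Fin m → ℝ) : Finset (Fin m → ℕ) :=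
  if ht f ≤ t then piAntidiag (supp f) (t - ht f) else ∅

lemma supp_add {m : ℕ} {f : Fin m → ℝ} (hf : ∀ i, 0 ≤ f i) {c : Fin m → ℕ}
    (hc : ∀ i, c i ≠ 0 → i ∈ supp f) : supp (fun i => f i + c i) = supp f := by
  ext i
  rw [mem_supp, mem_supp]
  by_cases h : c i = 0
  · simp [h]
  · have h1 := mem_supp.1 (hc i h)
    have h2 : 0 < f i := lt_of_le_of_ne (hf i) (Ne.symm h1)
    have : f i + c i ≠ 0 := by positivity
    simp [h1, this]

lemma A_card {m n : ℕ} {v : Fin m → Fin n → ℝ} (hv : ∀ i k, ∃ z : ℤ, v i k = z)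
    (t : ℕ) (hpos : 0 < t) :
    (A v t).ncard = ∑ f ∈ (B_finite v).toFinset, (fib t f).card := by
  classical
  rw [← card_sigma, ← Set.ncard_coe_finset]
  symm
  have mem : ∀ f c, (⟨f, c⟩ : (_ : Fin m → ℝ) × (Fin m → ℕ)) ∈
      (B_finite v).toFinset.sigma (fun f => fib t f) ↔
      f ∈ B v ∧ ht f ≤ t ∧ ∑ i, c i = t - ht f ∧ ∀ i, c i ≠ 0 → i ∈ supp f := by
    intro f c
    rw [mem_sigma, Set.Finite.mem_toFinset, fib]
    refine and_congr_right fun _ => ?_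
    split_ifs with h
    · rw [mem_piAntidiag]
      simp only [h, true_and]
      refine and_congr_left fun hc => ?_
      rw [Finset.sum_subset (subset_univ (supp f)) (fun i _ hi => by
        by_contra h'; exact hi (hc i h'))]
    · simp [h]
  refine Set.ncard_congr (fun p _ => fun i => p.1 i + (p.2 i : ℝ)) ?_ ?_ ?_
  · rintro ⟨f, c⟩ hp
    obtain ⟨hf, hle, hs, hc⟩ := (mem f c).1 hp
    obtain ⟨⟨a0, a1, a2, a3⟩, h1, h2⟩ := B_spec hf
    refine ⟨fun i => add_nonneg (a0 i) (Nat.cast_nonneg _), ?_, fun k => ?_, ?_⟩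
    · dsimp only
      rw [sum_add_distrib, a1, ← Nat.cast_sum, hs]
      push_cast [hle]; ring
    · obtain ⟨z, hz⟩ := a2 k
      obtain ⟨y, hy⟩ := T_nat_int hv c k
      refine ⟨z + y, ?_⟩
      have : (fun i => f i + (c i : ℝ)) = f + fun i => (c i : ℝ) := rfl
      simp only [this, map_add, Pi.add_apply, hz, hy]
      push_cast; rfl
    · dsimp only
      rw [supp_add a0 hc]; exact a3
  · rintro ⟨f, c⟩ ⟨f', c'⟩ hp hp' he
    obtain ⟨hf, hle, hs, hc⟩ := (mem f c).1 hp
    obtain ⟨hf', hle', hs', hc'⟩ := (mem f' c').1 hp'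
    have a0 := (B_spec hf).1.1
    have a0' := (B_spec hf').1.1
    have b0 := hf.2
    have b0' := hf'.2
    have key : ∀ i, c i = c' i := by
      intro i
      have hi : f i + (c i : ℝ) = f' i + (c' i : ℝ) := congrFun he i
      have l1 := a0 i
      have l2 := a0' i
      have u1 := b0 i
      have u2 := b0' i
      have p1 : c i ≠ 0 → 0 < f i := fun h =>
        lt_of_le_of_ne (a0 i) (Ne.symm (mem_supp.1 (hc i h)))
      have p2 : c' i ≠ 0 → 0 < f' i := fun h =>
        lt_of_le_of_ne (a0' i) (Ne.symm (mem_supp.1 (hc' i h)))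
      rcases lt_trichotomy (c i) (c' i) with h | h | h
      · have := p2 (by omega)
        have : (c i : ℝ) + 1 ≤ c' i := by exact_mod_cast h
        linarith
      · exact h
      · have := p1 (by omega)
        have : (c' i : ℝ) + 1 ≤ c i := by exact_mod_cast h
        linarith
    have e1 : c = c' := funext key
    have e2 : f = f' := by
      funext i
      have hi : f i + (c i : ℝ) = f' i + (c' i : ℝ) := congrFun he i
      rw [key i] at hi
      linarith
    rw [e1, e2]
  · rintro b ⟨h0, h1, h2, h3⟩
    let c : Fin m → ℕ := fun i => ⌈b i⌉₊ - 1
    let f : Fin m → ℝ := fun i => b i - c i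
    have hz : ∀ i, b i = 0 → c i = 0 := fun i hi => by simp [c, hi]
    have hp : ∀ i, b i ≠ 0 → 0 < f i ∧ f i ≤ 1 := by
      intro i hi
      have hbp : 0 < b i := lt_of_le_of_ne (h0 i) (Ne.symm hi)
      have h1 : 1 ≤ ⌈b i⌉₊ := Nat.one_le_ceil_iff.2 hbp
      have e : (c i : ℝ) = ⌈b i⌉₊ - 1 := by simp only [c]; push_cast [h1]; ring
      have := Nat.le_ceil (b i)
      have := Nat.ceil_lt_add_one hbp.le
      simp only [f, e]
      constructor <;> linarith
    have hf0 : ∀ i, b i = 0 → f i = 0 := fun i hi => by simp [f, hz i hi, hi]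
    have hfn : ∀ i, 0 ≤ f i := fun i => by
      by_cases h : b i = 0
      · rw [hf0 i h]
      · exact (hp i h).1.le
    have hfl : ∀ i, f i ≤ 1 := fun i => by
      by_cases h : b i = 0
      · rw [hf0 i h]; norm_num
      · exact (hp i h).2
    have hsupp : supp f = supp b := by
      ext i
      rw [mem_supp, mem_supp]
      exact ⟨fun h h' => h (hf0 i h'), fun h => (hp i h).1.ne'⟩
    have hsum : ∑ i, f i = (t : ℝ) - ((∑ i, c i : ℕ) : ℝ) := by
      simp only [f, sum_sub_distrib, h1]; push_cast; rfl
    have hcl : ∑ i, c i ≤ t := by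
      have : 0 ≤ ∑ i, f i := sum_nonneg fun i _ => hfn i
      have : ((∑ i, c i : ℕ) : ℝ) ≤ t := by linarith
      exact_mod_cast this
    have hsum' : ∑ i, f i = ((t - ∑ i, c i : ℕ) : ℝ) := by rw [hsum, Nat.cast_sub hcl]
    have hht : ht f = t - ∑ i, c i := by rw [ht, hsum', Nat.floor_natCast]
    have hfA : f ∈ A v (t - ∑ i, c i) := by
      refine ⟨hfn, hsum', fun k => ?_, by rw [hsupp]; exact h3⟩
      obtain ⟨z, hz⟩ := h2 k
      obtain ⟨y, hy⟩ := T_nat_int hv c k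
      refine ⟨z - y, ?_⟩
      have : f = b - fun i => (c i : ℝ) := rfl
      simp only [this, map_sub, Pi.sub_apply, hz, hy]
      push_cast; rfl
    have hge : 1 ≤ t - ∑ i, c i := by
      have : 0 < ∑ i, f i := by
        refine sum_pos' (fun i _ => hfn i) ?_
        by_contra hc
        push Not at hc
        have : ∑ i, b i = 0 := sum_eq_zero fun i _ => by
          by_contra h
          have := hc i (mem_univ i)
          linarith [(hp i h).1]
        rw [h1] at this
        have : t = 0 := by exact_mod_cast this
        omega
      rw [hsum'] at this
      have : 0 < t - ∑ i, c i := by exact_mod_cast this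
      omega
    refine ⟨⟨f, c⟩, (mem f c).2 ⟨⟨⟨_, hge, hfA⟩, hfl⟩, by omega, by omega, fun i hi => ?_⟩, ?_⟩
    · rw [hsupp, mem_supp]
      exact fun h => hi (hz i h)
    · funext i; simp [f]

lemma card_pi {m : ℕ} [DecidableEq (Fin m)] (s : Finset (Fin m)) (k : ℕ) (hs : 1 ≤ s.card) :
    (piAntidiag s k).card = (k + (s.card - 1)).choose (s.card - 1) := by
  have h := card_finsuppAntidiag_nat_eq_choose (s := s) k
  have e : (s.finsuppAntidiag k).card = (piAntidiag s k).card := by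
    rw [finsuppAntidiag, card_map, card_attach]
  rw [← e]
  convert h using 1
  rw [show s.card + k - 1 = k + (s.card - 1) by omega, Nat.choose_symm_add]

lemma fib_card {m n : ℕ} {v : Fin m → Fin n → ℝ} {f : Fin m → ℝ} (hf : f ∈ B v) (t : ℕ)
    (hpos : 0 < t) :
    (Polynomial.preHilbertPoly ℚ ((supp f).card - 1) (ht f)).eval (t : ℚ) = (fib t f).card := by
  classical
  obtain ⟨-, h1, h2⟩ := B_spec hf
  rw [fib]
  split_ifs with h
  · rw [Polynomial.preHilbertPoly_eq_choose_sub_add ℚ _ h]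
    congr 1
    rw [← card_pi _ _ (by omega)]
  · push Not at h
    simp only [card_empty, Nat.cast_zero, Polynomial.preHilbertPoly, Polynomial.eval_smul,
      Polynomial.eval_comp, Polynomial.eval_add, Polynomial.eval_sub, Polynomial.eval_X,
      Polynomial.eval_C, Polynomial.eval_one]
    set r := (supp f).card - 1 with hr
    have e : ((t : ℚ) - ht f + 1) = ((t + r - ht f : ℕ) : ℚ) - r + 1 := by
      rw [Nat.cast_sub (by omega)]; push_cast; ring
    rw [e, ← descPochhammer_eval_eq_ascPochhammer, descPochhammer_eval_eq_descFactorial,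
      Nat.descFactorial_eq_zero_iff_lt.2 (by omega)]
    simp

theorem main {m n : ℕ} (v : Fin m → Fin n → ℝ) (hm : 0 < m) (hv : ∀ i k, ∃ z : ℤ, v i k = z)
    (d : ℕ) (hd : Module.finrank ℝ (vectorSpan ℝ (Set.range v)) = d) :
    ∃ L : Polynomial ℚ, L.degree = d ∧
      ∀ t : ℕ, 0 < t → L.eval (t : ℚ) =
        latticeCount ((t : ℝ) • convexHull ℝ (Set.range v)) := by
  refine ⟨∑ f ∈ (B_finite v).toFinset,
    Polynomial.preHilbertPoly ℚ ((supp f).card - 1) (ht f), ?_, ?_⟩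
  · have hle : ∀ f ∈ (B_finite v).toFinset, (supp f).card - 1 ≤ d := by
      intro f hf
      have := good_card_le (B_spec ((B_finite v).mem_toFinset.1 hf)).1.2.2.2
      omega
    apply Polynomial.degree_eq_of_le_of_coeff_ne_zero
    · refine (Polynomial.degree_sum_le _ _).trans (Finset.sup_le fun f hf => ?_)
      refine Polynomial.degree_le_natDegree.trans ?_
      rw [Polynomial.natDegree_preHilbertPoly]
      exact_mod_cast hle f hf
    · rw [Polynomial.finsetSum_coeff]
      apply ne_of_gt
      obtain ⟨S, hS, hcard⟩ := good_greedy v hm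
      let f : Fin m → ℝ := fun i => ((if i ∈ S then 1 else 0 : ℕ) : ℝ)
      have hsf : supp f = S := by ext i; simp [mem_supp, f]
      have hfB : f ∈ B v := by
        refine ⟨⟨S.card, by omega, fun i => Nat.cast_nonneg _, ?_, T_nat_int hv _, ?_⟩, fun i => ?_⟩
        · simp [f]
        · rw [hsf]; exact hS
        · simp only [f]; split_ifs <;> simp
      refine sum_pos' (fun g hg => ?_) ⟨f, (B_finite v).mem_toFinset.2 hfB, ?_⟩
      · rcases (hle g hg).lt_or_eq with h | h
        · rw [Polynomial.coeff_eq_zero_of_natDegree_lt]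
          rwa [Polynomial.natDegree_preHilbertPoly]
        · rw [← h, Polynomial.coeff_preHilbertPoly_self]
          positivity
      · have : (supp f).card - 1 = d := by rw [hsf]; omega
        rw [this, Polynomial.coeff_preHilbertPoly_self]
        positivity
  · intro t ht'
    rw [count_eq v t ht', A_card hv t ht', Polynomial.eval_finset_sum]
    push_cast
    exact sum_congr rfl fun f hf => fib_card ((B_finite v).mem_toFinset.1 hf) t ht'

end Ehr

theorem stmt11 (n d : ℕ) (V : Finset (Fin n → ℤ)) (hV : V.Nonempty)
    (P : Set (Fin n → ℝ))
    (hP : P = convexHull ℝ ((fun (v : Fin n → ℤ) (i : Fin n) => (v i : ℝ)) '' V))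
    (hd : Module.finrank ℝ (affineSpan ℝ P).direction = d) :
    ∃ L : Polynomial ℚ, L.degree = d ∧
      ∀ t : ℕ, 0 < t → L.eval (t : ℚ) = latticeCount ((t : ℝ) • P) := by
  classical
  let v : Fin V.card → Fin n → ℝ := fun i k => ((V.equivFin.symm i : Fin n → ℤ) k : ℝ)
  have hr : ((fun (v : Fin n → ℤ) (i : Fin n) => (v i : ℝ)) '' (V : Set (Fin n → ℤ)))
      = Set.range v := by
    ext x
    constructor
    · rintro ⟨z, hz, rfl⟩
      exact ⟨V.equivFin ⟨z, hz⟩, by simp [v]⟩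
    · rintro ⟨i, rfl⟩
      exact ⟨_, (V.equivFin.symm i).2, rfl⟩
  rw [hr] at hP
  rw [hP, affineSpan_convexHull, direction_affineSpan] at hd
  rw [hP]
  exact Ehr.main v (Finset.card_pos.2 hV) (fun i k => ⟨_, rfl⟩) d hd
end

section
/- Let P ⊂ ℝⁿ be an integral polytope of dimension d with Ehrhart polynomial L_P. Then for every positive integer t, (−1)^d L_P(−t) = #(t·P° ∩ ℤⁿ), where P° is the relative interior of P (Ehrhart–Macdonald reciprocity). -/
open Pointwise

set_option linter.unusedSectionVars false

namespace EM

open Finset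

variable {ι : Type*} [Fintype ι] [DecidableEq ι] {E : Type*} [AddCommGroup E] [Module ℝ E]

/-- Existence of a positive vector avoiding finitely many hyperplanes. -/
lemma generic {α : Type*} (F : Finset α) (φ : α → (ι → ℝ)) (hF : ∀ f ∈ F, φ f ≠ 0) :
    ∃ a : ι → ℝ, (∀ i, 0 < a i) ∧ ∀ f ∈ F, ∑ i, φ f i * a i ≠ 0 := by
  classical
  let e := Fintype.equivFin ι
  let p : α → Polynomial ℝ := fun f => ∑ i, Polynomial.monomial (e i : ℕ) (φ f i)
  have hp : ∀ f ∈ F, p f ≠ 0 := by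
    intro f hf h0
    apply hF f hf
    funext i
    have : (p f).coeff (e i : ℕ) = φ f i := by
      simp only [p, Polynomial.finsetSum_coeff, Polynomial.coeff_monomial]
      rw [Finset.sum_eq_single i]
      · simp
      · intro j _ hj
        rw [if_neg]
        intro h
        exact hj (e.injective (Fin.ext h))
      · simp
    rw [← this, h0]; simp
  have hprod : (∏ f ∈ F, p f) ≠ 0 := Finset.prod_ne_zero_iff.mpr hp
  have hfin : {x : ℝ | (∏ f ∈ F, p f).IsRoot x}.Finite := Polynomial.finite_setOfPred_isRoot hprod
  obtain ⟨s, hs, hs'⟩ := (Set.Ioi_infinite (0 : ℝ)).exists_notMem_finite hfin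
  refine ⟨fun i => s ^ (e i : ℕ), fun i => pow_pos hs _, fun f hf h0 => hs' ?_⟩
  have h1 : (p f).eval s = 0 := by
    rw [← h0]
    simp [p, Polynomial.eval_finsetSum]
  simp only [Set.mem_ofPred_eq, Polynomial.IsRoot, Polynomial.eval_prod]
  exact Finset.prod_eq_zero hf h1

/-- `B` indexes a basis of `E` among the vectors `v`. -/
def IsB (v : ι → E) (B : Finset ι) : Prop :=
  LinearIndepOn ℝ v (B : Set ι) ∧ Submodule.span ℝ (v '' (B : Set ι)) = ⊤

/-- `c` is the coordinate map of `B`. -/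
structure IsC (v : ι → E) (B : Finset ι) (c : E →ₗ[ℝ] (ι → ℝ)) : Prop where
  sum : ∀ x, ∑ i, c x i • v i = x
  zero : ∀ x, ∀ i ∉ B, c x i = 0
  single : ∀ i ∈ B, c (v i) = Pi.single i 1

lemma IsB.exists_c {v : ι → E} {B : Finset ι} (h : IsB v B) :
    (∃ c, IsC v B c) ∧ B.card = Module.finrank ℝ E := by
  have hs : ⊤ ≤ Submodule.span ℝ (Set.range (fun i : (B : Set ι) => v i)) := by
    rw [← h.2, Set.image_eq_range]
  let b := Module.Basis.mk h.1 hs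
  have hb : ∀ i, b i = v i := fun i => by simp [b]
  refine ⟨⟨LinearMap.pi (fun i => if hi : i ∈ (B : Set ι) then b.coord ⟨i, hi⟩ else 0),
    ?_, ?_, ?_⟩, ?_⟩
  · intro x
    conv_rhs => rw [← b.sum_repr x]
    simp only [hb]
    rw [← Finset.sum_subset (Finset.subset_univ B)]
    · rw [← Finset.sum_coe_sort B]
      apply Finset.sum_congr rfl
      intro i _
      simp
    · intro i _ hi
      simp [hi]
  · intro x i hi
    simp [hi]
  · intro i hi
    funext j
    simp only [LinearMap.pi_apply]
    have hi' : v i = b ⟨i, hi⟩ := (hb ⟨i, hi⟩).symm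
    by_cases hj : j ∈ B
    · rw [dif_pos (by simpa using hj), hi']
      simp only [Module.Basis.coord_apply, Module.Basis.repr_self]
      rw [Finsupp.single_apply, Pi.single_apply]
      simp [eq_comm]
    · rw [dif_neg (by simpa using hj)]
      have : j ≠ i := fun h => hj (h ▸ hi)
      simp [this]
  · rw [Module.finrank_eq_card_basis b]; simp

lemma IsC.unique {v : ι → E} {B : Finset ι} {c : E →ₗ[ℝ] (ι → ℝ)} (h : IsC v B c)
    (a : ι → ℝ) (ha : ∀ i ∉ B, a i = 0) : c (∑ i, a i • v i) = a := by
  rw [map_sum]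
  funext j
  simp only [map_smul, Finset.sum_apply, Pi.smul_apply, smul_eq_mul]
  by_cases hj : j ∈ B
  · rw [Finset.sum_eq_single j]
    · simp [h.single j hj]
    · intro i _ hij
      by_cases hi : i ∈ B
      · simp [h.single i hi, hij.symm]
      · simp [ha i hi]
    · simp
  · rw [ha j hj]
    apply Finset.sum_eq_zero
    intro i _
    simp [h.zero _ j hj]

/-- Linear independent supports extend to bases. -/
lemma exists_isB {v : ι → E} (hspan : Submodule.span ℝ (Set.range v) = ⊤) (S : Finset ι)
    (hS : LinearIndepOn ℝ v (S : Set ι)) : ∃ B, IsB v B ∧ S ⊆ B := by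
  classical
  have h := hS.linearIndepOn_extend (Set.subset_univ _)
  refine ⟨(hS.extend (Set.subset_univ _)).toFinset, ⟨?_, ?_⟩, ?_⟩
  · simpa using h
  · have := hS.span_image_extend_eq_span_image (Set.subset_univ _)
    simp only [Set.coe_toFinset]
    rw [this, Set.image_univ, hspan]
  · intro i hi
    simpa using hS.subset_extend (Set.subset_univ _) (by simpa using hi)

/-- Carathéodory with cost control. -/
lemma cara {v : ι → E} (h : E →ₗ[ℝ] ℝ) (h1 : ∀ i, h (v i) = 1) (w : ι → ℝ) :
    ∀ (k : ℕ) (a : ι → ℝ), (∀ i, 0 ≤ a i) → (univ.filter fun i => a i ≠ 0).card = k →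
    ∃ a' : ι → ℝ, (∀ i, 0 ≤ a' i) ∧ ∑ i, a' i • v i = ∑ i, a i • v i ∧
      ∑ i, w i * a' i ≤ ∑ i, w i * a i ∧
      LinearIndepOn ℝ v ((univ.filter fun i => a' i ≠ 0 : Finset ι) : Set ι) := by
  intro k
  induction k using Nat.strong_induction_on with
  | _ k ih =>
  intro a ha hk
  by_cases hli : LinearIndepOn ℝ v ((univ.filter fun i => a i ≠ 0 : Finset ι) : Set ι)
  · exact ⟨a, ha, rfl, le_rfl, hli⟩
  have key : ∃ r : ι → ℝ, ∑ i, r i • v i = 0 ∧ (∀ i, a i = 0 → r i = 0) ∧ (∃ i, r i ≠ 0) ∧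
      ∑ i, w i * r i ≤ 0 := by
    rw [linearIndepOn_finset_iff] at hli
    push Not at hli
    obtain ⟨r, hr, i, hi, hri⟩ := hli
    have hi' : a i ≠ 0 := by simpa using hi
    let r' : ι → ℝ := fun i => if a i ≠ 0 then r i else 0
    have hr' : ∑ i, r' i • v i = 0 := by
      rw [← hr, Finset.sum_filter]
      apply Finset.sum_congr rfl
      intro i _
      by_cases h : a i = 0 <;> simp [r', h]
    have hz : ∀ i, a i = 0 → r' i = 0 := fun i h => by simp [r', h]
    have hne : r' i ≠ 0 := by simp [r', hi', hri]
    rcases le_total (∑ i, w i * r' i) 0 with hle | hle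
    · exact ⟨r', hr', hz, ⟨i, hne⟩, hle⟩
    · refine ⟨-r', ?_, ?_, ⟨i, by simpa using hne⟩, ?_⟩
      · simp [hr']
      · intro i h; simp [hz i h]
      · simpa using hle
  obtain ⟨r, hr0, hrz, ⟨i₀, hi₀⟩, hrw⟩ := key
  have hsum : ∑ i, r i = 0 := by
    have := congrArg h hr0
    simpa [h1] using this
  have hneg : (univ.filter fun i => r i < 0).Nonempty := by
    by_contra hcon
    have hnn : ∀ i, 0 ≤ r i := by
      intro i
      by_contra hlt
      exact hcon ⟨i, by simpa using hlt⟩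
    exact hi₀ ((Finset.sum_eq_zero_iff_of_nonneg (fun i _ => hnn i)).mp hsum i₀ (mem_univ _))
  obtain ⟨j, hj, hmin⟩ := Finset.exists_min_image _ (fun i => a i / (-r i)) hneg
  have hj' : r j < 0 := by simpa using hj
  let s := a j / (-r j)
  have hs : 0 ≤ s := div_nonneg (ha j) (by linarith)
  have haj : a j ≠ 0 := fun h => by have := hrz j h; linarith
  let a' : ι → ℝ := fun i => a i + s * r i
  have ha' : ∀ i, 0 ≤ a' i := by
    intro i
    by_cases hri : r i < 0
    · have h2 : s ≤ a i / (-r i) := hmin i (by simpa using hri)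
      rw [le_div_iff₀ (by linarith)] at h2
      simp only [a']; linarith
    · have := mul_nonneg hs (not_lt.mp hri)
      have := ha i
      simp only [a']; linarith
  have haj' : a' j = 0 := by
    have : r j ≠ 0 := hj'.ne
    simp only [a', s]; field_simp; ring
  have hcard : (univ.filter fun i => a' i ≠ 0).card < k := by
    rw [← hk]
    apply Finset.card_lt_card
    rw [Finset.ssubset_iff_of_subset]
    · exact ⟨j, by simpa using haj, by simpa using haj'⟩
    · intro i hi
      simp only [mem_filter, mem_univ, true_and] at hi ⊢
      intro h0
      apply hi
      simp [a', h0, hrz i h0]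
  obtain ⟨a'', h3, h4, h5, h6⟩ := ih _ hcard a' ha' rfl
  refine ⟨a'', h3, ?_, ?_, h6⟩
  · rw [h4]
    simp only [a', add_smul, Finset.sum_add_distrib, mul_smul]
    rw [← Finset.smul_sum, hr0]; simp
  · refine h5.trans ?_
    simp only [a', mul_add, Finset.sum_add_distrib]
    have : ∑ i, w i * (s * r i) = s * ∑ i, w i * r i := by
      rw [Finset.mul_sum]; apply Finset.sum_congr rfl; intros; ring
    rw [this]
    nlinarith

/-- The triangulation. -/
lemma exists_triang (v : ι → E) (hspan : Submodule.span ℝ (Set.range v) = ⊤)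
    (h : E →ₗ[ℝ] ℝ) (h1 : ∀ i, h (v i) = 1) (c : Finset ι → E →ₗ[ℝ] (ι → ℝ))
    (hc : ∀ B, IsB v B → IsC v B (c B)) :
    ∃ T : Finset (Finset ι), (∀ B ∈ T, IsB v B) ∧
      (∀ y, ∀ B ∈ T, ∀ B' ∈ T, (∀ i ∈ B, 0 < c B y i) → (∀ i ∈ B', 0 < c B' y i) → B = B') ∧
      (∀ y, (∀ B, IsB v B → ∀ i ∈ B, c B y i ≠ 0) → (∃ a : ι → ℝ, (∀ i, 0 ≤ a i) ∧
        ∑ i, a i • v i = y) → ∃ B ∈ T, ∀ i ∈ B, 0 < c B y i) := by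
  classical
  obtain ⟨w, -, hw⟩ := generic
    ((univ : Finset (Finset ι × ι)).filter fun p => IsB v p.1 ∧ p.2 ∉ p.1)
    (fun p => c p.1 (v p.2) - Pi.single p.2 1) (by
      rintro ⟨B, j⟩ hp h0
      simp only [mem_filter, mem_univ, true_and] at hp
      have := congrFun h0 j
      simp [(hc B hp.1).zero _ j hp.2] at this)
  have hw' : ∀ B, IsB v B → ∀ j ∉ B, ∑ i, w i * c B (v j) i ≠ w j := by
    intro B hB j hj h0
    apply hw (B, j) (by simp [hB, hj])
    simp only [Pi.sub_apply, sub_mul, Finset.sum_sub_distrib]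
    rw [sub_eq_zero]
    simp only [mul_comm _ (w _), h0]
    simp [Pi.single_apply]
  have hin : ∀ B, IsB v B → ∀ j ∈ B, ∑ i, w i * c B (v j) i = w j := by
    intro B hB j hj
    simp [(hc B hB).single j hj, Pi.single_apply]
  refine ⟨univ.filter fun B => IsB v B ∧ ∀ j, ∑ i, w i * c B (v j) i ≤ w j, ?_, ?_, ?_⟩
  · intro B hB
    simp only [mem_filter] at hB
    exact hB.2.1
  · -- uniqueness
    intro y
    have key : ∀ B B', IsB v B → IsB v B' → (∀ j, ∑ i, w i * c B (v j) i ≤ w j) →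
        (∀ i ∈ B', 0 < c B' y i) → ∑ i, w i * c B y i ≤ ∑ i, w i * c B' y i ∧
        (¬ B' ⊆ B → ∑ i, w i * c B y i < ∑ i, w i * c B' y i) := by
      intro B B' hB hB' hT hpos
      have hnn : ∀ j, 0 ≤ c B' y j := by
        intro j
        by_cases hj : j ∈ B'
        · exact (hpos j hj).le
        · exact ((hc B' hB').zero y j hj).ge
      have e1 : ∑ i, w i * c B y i = ∑ j, c B' y j * ∑ i, w i * c B (v j) i := by
        have : c B y = ∑ j, c B' y j • c B (v j) := by
          conv_lhs => rw [← (hc B' hB').sum y]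
          simp
        rw [this]
        simp only [Finset.sum_apply, Pi.smul_apply, smul_eq_mul, Finset.mul_sum]
        rw [Finset.sum_comm]
        apply Finset.sum_congr rfl; intros
        apply Finset.sum_congr rfl; intros
        ring
      have e2 : ∑ i, w i * c B' y i = ∑ j, c B' y j * w j := by
        apply Finset.sum_congr rfl; intros; ring
      rw [e1, e2]
      refine ⟨Finset.sum_le_sum fun j _ => mul_le_mul_of_nonneg_left (hT j) (hnn j), ?_⟩
      intro hsub
      obtain ⟨j, hj, hj'⟩ := Finset.not_subset.mp hsub
      refine Finset.sum_lt_sum (fun j _ => mul_le_mul_of_nonneg_left (hT j) (hnn j))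
        ⟨j, mem_univ _, mul_lt_mul_of_pos_left (lt_of_le_of_ne (hT j) (hw' B hB j hj')) (hpos j hj)⟩
    intro B hB B' hB' hp hp'
    simp only [mem_filter, mem_univ, true_and] at hB hB'
    obtain ⟨k1, k2⟩ := key B B' hB.1 hB'.1 hB.2 hp'
    obtain ⟨k3, k4⟩ := key B' B hB'.1 hB.1 hB'.2 hp
    apply Finset.Subset.antisymm
    · by_contra hcon
      have := k4 hcon
      linarith
    · by_contra hcon
      have := k2 hcon
      linarith
  · -- existence
    intro y hy hya
    have step : ∀ a : ι → ℝ, (∀ i, 0 ≤ a i) → ∑ i, a i • v i = y →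
        ∃ B, IsB v B ∧ (∀ i, 0 ≤ c B y i) ∧ ∑ i, w i * c B y i ≤ ∑ i, w i * a i := by
      intro a ha hay
      obtain ⟨a', h2, h3, h4, h5⟩ := cara h h1 w _ a ha rfl
      obtain ⟨B, hB, hsub⟩ := exists_isB hspan _ h5
      have : c B y = a' := by
        rw [← hay, ← h3]
        apply (hc B hB).unique
        intro i hi
        by_contra h0
        exact hi (hsub (by simpa using h0))
      exact ⟨B, hB, by rwa [this], by rwa [this]⟩
    obtain ⟨a, ha, hay⟩ := hya
    obtain ⟨B0, hB0, hB0', -⟩ := step a ha hay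
    obtain ⟨B, hBm, hBmin⟩ := Finset.exists_min_image
      (univ.filter fun B => IsB v B ∧ ∀ i, 0 ≤ c B y i) (fun B => ∑ i, w i * c B y i)
      ⟨B0, by simp [hB0, hB0']⟩
    simp only [mem_filter, mem_univ, true_and] at hBm hBmin
    obtain ⟨hB, hnn⟩ := hBm
    have hpos : ∀ i ∈ B, 0 < c B y i := fun i hi => lt_of_le_of_ne (hnn i) (hy B hB i hi).symm
    refine ⟨B, ?_, hpos⟩
    simp only [mem_filter, mem_univ, true_and]
    refine ⟨hB, ?_⟩
    intro j
    by_contra hlt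
    push Not at hlt
    -- small step
    have hε : ∃ ε : ℝ, 0 < ε ∧ ∀ i ∈ B, 0 ≤ c B y i - ε * c B (v j) i := by
      have : ∀ᶠ ε in nhdsWithin (0:ℝ) (Set.Ioi 0), ∀ i ∈ B, 0 ≤ c B y i - ε * c B (v j) i := by
        rw [Filter.eventually_all_finset]
        intro i hi
        apply Filter.Eventually.filter_mono nhdsWithin_le_nhds
        have : Filter.Tendsto (fun ε : ℝ => c B y i - ε * c B (v j) i) (nhds 0)
            (nhds (c B y i - 0 * c B (v j) i)) := by
          apply Continuous.tendsto; fun_prop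
        have h2 := this.eventually (lt_mem_nhds (a := (0:ℝ)) (by simpa using hpos i hi))
        exact h2.mono fun _ h => le_of_lt h
      obtain ⟨ε, h1, h2⟩ := (this.and self_mem_nhdsWithin).exists
      exact ⟨ε, h2, h1⟩
    obtain ⟨ε, hε0, hε⟩ := hε
    obtain ⟨B', hB', hnn', hcost⟩ := step
      (fun i => c B y i - ε * c B (v j) i + ε * (Pi.single j 1 : ι → ℝ) i) (by
        intro i
        have h2 : 0 ≤ ε * (Pi.single j 1 : ι → ℝ) i := by
          apply mul_nonneg hε0.le
          rw [Pi.single_apply]; split_ifs <;> norm_num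
        by_cases hi : i ∈ B
        · have := hε i hi
          linarith
        · simp only [(hc B hB).zero _ i hi]
          linarith) (by
        simp only [add_smul, sub_smul, Finset.sum_add_distrib, Finset.sum_sub_distrib, mul_smul]
        rw [← Finset.smul_sum, ← Finset.smul_sum, (hc B hB).sum, (hc B hB).sum]
        simp [Pi.single_apply])
    have h3 := hBmin B' ⟨hB', hnn'⟩
    have h4 : ∑ i, w i * (c B y i - ε * c B (v j) i + ε * (Pi.single j 1 : ι → ℝ) i) =
        ∑ i, w i * c B y i - ε * ∑ i, w i * c B (v j) i + ε * w j := by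
      simp only [mul_add, mul_sub, Finset.sum_add_distrib, Finset.sum_sub_distrib]
      congr 1
      · congr 1
        rw [Finset.mul_sum]
        apply Finset.sum_congr rfl; intros; ring
      · simp [Pi.single_apply, mul_comm]
    rw [h4] at hcost
    nlinarith

end EM

namespace EM

open Finset

variable {ι : Type*} [Fintype ι] [DecidableEq ι] {E : Type*} [AddCommGroup E] [Module ℝ E]

/-- The binomial polynomial function `s ↦ binom (s + K) K`. -/
noncomputable def bf (K : ℕ) (s : ℚ) : ℚ := (∏ j ∈ range K, (s + 1 + j)) / (K.factorial : ℚ)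

lemma bf_nat (K s : ℕ) : bf K s = ((s + K).choose K : ℕ) := by
  unfold bf
  rw [div_eq_iff (by exact_mod_cast K.factorial_ne_zero)]
  have h := Nat.ascFactorial_eq_factorial_mul_choose s K
  rw [Nat.ascFactorial_eq_prod_range] at h
  have h' := congrArg (Nat.cast : ℕ → ℚ) h
  push_cast at h'
  rw [h', mul_comm]

lemma bf_zero (K : ℕ) (m : ℤ) (h1 : m < 0) (h2 : -(K : ℤ) ≤ m) : bf K m = 0 := by
  unfold bf
  rw [Finset.prod_eq_zero (i := (-m - 1).toNat)]
  · simp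
  · rw [Finset.mem_range]; omega
  · have : (((-m - 1).toNat : ℕ) : ℤ) = -m - 1 := by omega
    have h' : (((-m - 1).toNat : ℕ) : ℚ) = -m - 1 := by exact_mod_cast this
    rw [h']; ring

lemma bf_neg (K : ℕ) (s : ℚ) : bf K (-s - K - 1) = (-1) ^ K * bf K s := by
  unfold bf
  rw [← mul_div_assoc]
  congr 1
  rw [← Finset.prod_range_reflect]
  have : ((-1 : ℚ)) ^ K = ∏ j ∈ range K, (-1 : ℚ) := by simp
  rw [this, ← Finset.prod_mul_distrib]
  apply Finset.prod_congr rfl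
  intro j hj
  have hj' : j < K := by simpa using hj
  rw [Nat.cast_sub (by omega), Nat.cast_sub (by omega)]
  push_cast
  ring

lemma card_piA (B : Finset ι) (K : ℕ) (hB : B.card = K + 1) (s : ℕ) :
    (#(piAntidiag B s) : ℚ) = bf K s := by
  have h := card_finsuppAntidiag_nat_eq_choose (s := B) s
  rw [finsuppAntidiag, card_map, card_attach, hB] at h
  rw [h, bf_nat]
  have : K + 1 + s - 1 = s + K := by omega
  rw [this, Nat.choose_symm_add]

/-- Half-open cone condition. -/
def HO (B : Finset ι) (c : E →ₗ[ℝ] (ι → ℝ)) (S : ι → Prop) (x : E) : Prop :=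
  ∀ i ∈ B, (S i → 0 < c x i) ∧ (¬ S i → 0 ≤ c x i)

/-- Half-open parallelepiped condition. -/
def PIP (B : Finset ι) (c : E →ₗ[ℝ] (ι → ℝ)) (S : ι → Prop) (x : E) : Prop :=
  ∀ i ∈ B, (S i → 0 < c x i ∧ c x i ≤ 1) ∧ (¬ S i → 0 ≤ c x i ∧ c x i < 1)

lemma IsC.height {v : ι → E} {B : Finset ι} {c : E →ₗ[ℝ] (ι → ℝ)} (hc : IsC v B c)
    {h : E →ₗ[ℝ] ℝ} (h1 : ∀ i, h (v i) = 1) (x : E) : h x = ∑ i ∈ B, c x i := by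
  conv_lhs => rw [← hc.sum x]
  rw [map_sum]
  simp only [map_smul, h1, smul_eq_mul, mul_one]
  exact (Finset.sum_subset (Finset.subset_univ B) (fun i _ hi => hc.zero x i hi)).symm

lemma count {v : ι → E} {B : Finset ι} {c : E →ₗ[ℝ] (ι → ℝ)} (hc : IsC v B c)
    (Λ : AddSubgroup E) (hv : ∀ i, v i ∈ Λ) (h : E →ₗ[ℝ] ℝ) (h1 : ∀ i, h (v i) = 1)
    (hint : ∀ x ∈ Λ, ∃ m : ℤ, h x = m) (K : ℕ) (hB : B.card = K + 1) (S : ι → Prop)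
    (Q : Finset E) (hQ : ∀ x, x ∈ Q ↔ x ∈ Λ ∧ PIP B c S x) (t : ℕ) (ht : 0 < t) :
    (Set.ncard {x | x ∈ Λ ∧ h x = t ∧ HO B c S x} : ℚ) = ∑ p ∈ Q, bf K (t - (⌊h p⌋ : ℤ)) := by
  classical
  let N : E → Finset (ι → ℕ) := fun p =>
    if ⌊h p⌋ ≤ (t : ℤ) then piAntidiag B (t - ⌊h p⌋ : ℤ).toNat else ∅
  let g : (Σ _ : E, ι → ℕ) → E := fun z => z.1 + ∑ i, (z.2 i : ℝ) • v i
  have hN : ∀ p ∈ Q, ∀ k, k ∈ N p ↔ h p + ∑ i ∈ B, (k i : ℝ) = t ∧ ∀ i ∉ B, k i = 0 := by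
    intro p hp k
    obtain ⟨m, hm⟩ := hint p ((hQ p).1 hp).1
    have hs : ∀ i, (k i ≠ 0 → i ∈ B) ↔ (i ∉ B → k i = 0) := fun i => by tauto
    simp only [N, hm, Int.floor_intCast]
    split_ifs with hle
    · rw [mem_piAntidiag]
      simp only [hs]
      apply and_congr_left
      intro _
      constructor
      · intro h2
        have : (∑ i ∈ B, (k i : ℤ)) = t - m := by
          rw [← Nat.cast_sum, h2]; omega
        have h3 : (∑ i ∈ B, (k i : ℝ)) = t - m := by exact_mod_cast this
        rw [h3]; ring
      · intro h2
        have : m + (∑ i ∈ B, (k i : ℤ)) = t := by exact_mod_cast h2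
        rw [← Nat.cast_sum] at this
        have h3 : B.sum k = ∑ i ∈ B, k i := rfl
        omega
    · simp only [notMem_empty, false_iff, not_and]
      intro h2
      have : m + (∑ i ∈ B, (k i : ℤ)) = t := by exact_mod_cast h2
      rw [← Nat.cast_sum] at this
      omega
  have hck : ∀ k : ι → ℕ, (∀ i ∉ B, k i = 0) → c (∑ i, (k i : ℝ) • v i) = fun i => (k i : ℝ) := by
    intro k hk
    exact hc.unique (fun i => (k i : ℝ)) (fun i hi => by simp [hk i hi])
  have himg : {x | x ∈ Λ ∧ h x = t ∧ HO B c S x} = ((Q.sigma N).image g : Finset E) := by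
    ext x
    simp only [Set.mem_ofPred_eq, coe_image, Set.mem_image, mem_coe, mem_sigma, Sigma.exists, g]
    constructor
    · rintro ⟨hx, hxt, hHO⟩
      have hk : ∀ i, ∃ k : ℕ, (i ∉ B → k = 0) ∧ (i ∈ B →
          (S i → 0 < c x i - k ∧ c x i - k ≤ 1) ∧ (¬ S i → 0 ≤ c x i - k ∧ c x i - k < 1)) := by
        intro i
        by_cases hi : i ∈ B
        · by_cases hS : S i
          · have hpos := (hHO i hi).1 hS
            refine ⟨⌈c x i⌉₊ - 1, by tauto, fun _ => ⟨fun _ => ?_, by tauto⟩⟩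
            have hp : 0 < ⌈c x i⌉₊ := Nat.ceil_pos.mpr hpos
            rw [Nat.cast_sub hp]
            have e1 := Nat.ceil_lt_add_one hpos.le
            have e2 := Nat.le_ceil (c x i)
            push_cast
            constructor <;> linarith
          · have hpos := (hHO i hi).2 hS
            refine ⟨⌊c x i⌋₊, by tauto, fun _ => ⟨by tauto, fun _ => ?_⟩⟩
            have e1 := Nat.floor_le hpos
            have e2 := Nat.lt_floor_add_one (c x i)
            constructor <;> linarith
        · exact ⟨0, by tauto, by tauto⟩
      choose k hk0 hk1 using hk
      have hsumΛ : ∑ i, (k i : ℝ) • v i ∈ Λ := by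
        apply sum_mem
        intro i _
        rw [Nat.cast_smul_eq_nsmul]
        exact Λ.nsmul_mem (hv i) _
      have hp : x - ∑ i, (k i : ℝ) • v i ∈ Q := by
        rw [hQ]
        refine ⟨Λ.sub_mem hx hsumΛ, ?_⟩
        intro i hi
        rw [map_sub, hck k hk0]
        exact hk1 i hi
      refine ⟨x - ∑ i, (k i : ℝ) • v i, k, ⟨hp, ?_⟩, by simp⟩
      rw [hN _ hp]
      refine ⟨?_, hk0⟩
      rw [map_sub, hxt, hc.height h1 (∑ i, (k i : ℝ) • v i), hck k hk0]
      ring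
    · rintro ⟨p, k, ⟨hp, hk⟩, rfl⟩
      rw [hN p hp] at hk
      obtain ⟨hpΛ, hpP⟩ := (hQ p).1 hp
      refine ⟨?_, ?_, ?_⟩
      · apply Λ.add_mem hpΛ
        apply sum_mem
        intro i _
        rw [Nat.cast_smul_eq_nsmul]
        exact Λ.nsmul_mem (hv i) _
      · rw [map_add, hc.height h1 (∑ i, (k i : ℝ) • v i), hck k hk.2]
        exact hk.1
      · intro i hi
        rw [map_add, hck k hk.2]
        simp only [Pi.add_apply]
        have hk0 : (0 : ℝ) ≤ k i := Nat.cast_nonneg _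
        refine ⟨fun hS => ?_, fun hS => ?_⟩
        · have := ((hpP i hi).1 hS).1; linarith
        · have := ((hpP i hi).2 hS).1; linarith
  have hinj : Set.InjOn g (Q.sigma N : Finset _) := by
    rintro ⟨p, k⟩ hpk ⟨p', k'⟩ hpk' heq
    simp only [coe_sigma, Set.mem_sigma_iff, mem_coe] at hpk hpk'
    obtain ⟨hp, hk⟩ := hpk
    obtain ⟨hp', hk'⟩ := hpk'
    rw [hN _ hp] at hk
    rw [hN _ hp'] at hk'
    simp only [g] at heq
    have hkk : k = k' := by
      funext i
      by_cases hi : i ∈ B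
      · have e := congrFun (congrArg c heq) i
        rw [map_add, map_add, hck k hk.2, hck k' hk'.2] at e
        simp only [Pi.add_apply] at e
        have q1 := ((hQ p).1 hp).2 i hi
        have q2 := ((hQ p').1 hp').2 i hi
        have hlt : |(k i : ℝ) - k' i| < 1 := by
          rw [abs_lt]
          by_cases hS : S i
          · have q3 := q1.1 hS
            have q4 := q2.1 hS
            constructor <;> linarith
          · have q3 := q1.2 hS
            have q4 := q2.2 hS
            constructor <;> linarith
        have hlt' : |(k i : ℤ) - k' i| < 1 := by exact_mod_cast hlt
        rw [Int.abs_lt_one_iff] at hlt'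
        omega
      · rw [hk.2 i hi, hk'.2 i hi]
    subst hkk
    have : p = p' := by simpa using heq
    subst this
    rfl
  rw [himg, Set.ncard_coe_finset, Finset.card_image_of_injOn hinj, card_sigma]
  push_cast
  apply Finset.sum_congr rfl
  intro p hp
  obtain ⟨hpΛ, hpP⟩ := (hQ p).1 hp
  obtain ⟨m, hm⟩ := hint p hpΛ
  simp only [N, hm, Int.floor_intCast]
  split_ifs with hle
  · rw [card_piA B K hB]
    congr 1
    have : (((t - m : ℤ).toNat : ℕ) : ℤ) = t - m := by omega
    exact_mod_cast this
  · have hle2 : m ≤ K + 1 := by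
      have h2 : h p ≤ ∑ i ∈ B, (1 : ℝ) := by
        rw [hc.height h1 p]
        apply Finset.sum_le_sum
        intro i hi
        by_cases hS : S i
        · exact ((hpP i hi).1 hS).2
        · exact ((hpP i hi).2 hS).2.le
      rw [hm] at h2
      simp only [sum_const, hB, nsmul_eq_mul, mul_one] at h2
      exact_mod_cast h2
    have := bf_zero K (t - m) (by omega) (by omega)
    push_cast at this
    rw [this]; simp

lemma recip {v : ι → E} {B : Finset ι} {c : E →ₗ[ℝ] (ι → ℝ)} (hc : IsC v B c)
    (Λ : AddSubgroup E) (hv : ∀ i, v i ∈ Λ) (h : E →ₗ[ℝ] ℝ) (h1 : ∀ i, h (v i) = 1)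
    (hint : ∀ x ∈ Λ, ∃ m : ℤ, h x = m)
    (hfin : ∀ t : ℕ, {x | x ∈ Λ ∧ h x = t ∧ ∃ a : ι → ℝ, (∀ i, 0 ≤ a i) ∧
      ∑ i, a i • v i = x}.Finite)
    (K : ℕ) (hB : B.card = K + 1) (S : ι → Prop) :
    ∃ p : Polynomial ℚ, ∀ t : ℕ, 0 < t →
      p.eval (t : ℚ) = Set.ncard {x | x ∈ Λ ∧ h x = t ∧ HO B c S x} ∧
      (-1) ^ K * p.eval (-(t : ℚ)) =
        Set.ncard {x | x ∈ Λ ∧ h x = t ∧ HO B c (fun i => ¬ S i) x} := by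
  classical
  have hPfin : {x | x ∈ Λ ∧ PIP B c S x}.Finite := by
    apply Set.Finite.subset (Set.Finite.biUnion (Set.finite_Iic (K + 1)) (fun t _ => hfin t))
    rintro x ⟨hx, hxP⟩
    obtain ⟨m, hm⟩ := hint x hx
    have hb : ∀ i ∈ B, 0 ≤ c x i ∧ c x i ≤ 1 := by
      intro i hi
      by_cases hS : S i
      · have := (hxP i hi).1 hS; exact ⟨this.1.le, this.2⟩
      · have := (hxP i hi).2 hS; exact ⟨this.1, this.2.le⟩
    have hh := hc.height h1 x
    have hm0 : 0 ≤ m := by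
      have : 0 ≤ h x := by rw [hh]; exact Finset.sum_nonneg fun i hi => (hb i hi).1
      rw [hm] at this; exact_mod_cast this
    have hm1 : m ≤ K + 1 := by
      have : h x ≤ ∑ i ∈ B, (1 : ℝ) := by
        rw [hh]; exact Finset.sum_le_sum fun i hi => (hb i hi).2
      rw [hm] at this
      simp only [sum_const, hB, nsmul_eq_mul, mul_one] at this
      exact_mod_cast this
    simp only [Set.mem_iUnion]
    refine ⟨m.toNat, by simp; omega, hx, ?_, c x, ?_, hc.sum x⟩
    · rw [hm]
      have : ((m.toNat : ℕ) : ℤ) = m := by omega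
      exact_mod_cast this.symm
    · intro i
      by_cases hi : i ∈ B
      · exact (hb i hi).1
      · rw [hc.zero x i hi]
  let Q := hPfin.toFinset
  have hQ : ∀ x, x ∈ Q ↔ x ∈ Λ ∧ PIP B c S x := by simp [Q]
  let u : E := ∑ i ∈ B, v i
  have huΛ : u ∈ Λ := sum_mem fun i _ => hv i
  have hcu : ∀ i ∈ B, c u i = 1 := by
    intro i hi
    have : u = ∑ i, (if i ∈ B then (1 : ℝ) else 0) • v i := by simp [u, ite_smul]
    rw [this, hc.unique _ (fun i hi => by simp [hi])]
    simp [hi]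
  have hu : h u = K + 1 := by simp [u, h1, hB]
  let Q' := Q.image (fun x => u - x)
  have hQ' : ∀ x, x ∈ Q' ↔ x ∈ Λ ∧ PIP B c (fun i => ¬ S i) x := by
    have hflip : ∀ (S' : ι → Prop) x, PIP B c S' x → PIP B c (fun i => ¬ S' i) (u - x) := by
      intro S' x hx i hi
      have := hx i hi
      rw [map_sub, Pi.sub_apply, hcu i hi]
      refine ⟨fun hS => ?_, fun hS => ?_⟩
      · have := this.2 hS; constructor <;> linarith
      · have := this.1 (not_not.mp hS); constructor <;> linarith
    intro x
    simp only [Q', mem_image, hQ]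
    constructor
    · rintro ⟨y, ⟨hy, hyP⟩, rfl⟩
      exact ⟨Λ.sub_mem huΛ hy, hflip S y hyP⟩
    · rintro ⟨hx, hxP⟩
      refine ⟨u - x, ⟨Λ.sub_mem huΛ hx, ?_⟩, by simp⟩
      have := hflip _ x hxP
      simpa using this
  refine ⟨∑ p ∈ Q, Polynomial.C ((K.factorial : ℚ)⁻¹) * ∏ j ∈ range K,
    (Polynomial.X - Polynomial.C (((⌊h p⌋ : ℤ) : ℚ)) + 1 + Polynomial.C (j : ℚ)), ?_⟩
  have hev : ∀ s : ℚ, (∑ p ∈ Q, Polynomial.C ((K.factorial : ℚ)⁻¹) * ∏ j ∈ range K,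
    (Polynomial.X - Polynomial.C (((⌊h p⌋ : ℤ) : ℚ)) + 1 + Polynomial.C (j : ℚ))).eval s =
      ∑ p ∈ Q, bf K (s - (⌊h p⌋ : ℤ)) := by
    intro s
    rw [Polynomial.eval_finsetSum]
    apply Finset.sum_congr rfl
    intro p _
    rw [Polynomial.eval_mul, Polynomial.eval_prod, Polynomial.eval_C, bf, div_eq_inv_mul]
    congr 1
    apply Finset.prod_congr rfl
    intro j _
    simp
  intro t ht
  rw [hev, hev]
  refine ⟨(count hc Λ hv h h1 hint K hB S Q hQ t ht).symm, ?_⟩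
  rw [count hc Λ hv h h1 hint K hB _ Q' hQ' t ht]
  simp only [Q']
  rw [Finset.sum_image (by intro a _ b _ hab; simpa using hab), Finset.mul_sum]
  apply Finset.sum_congr rfl
  intro p hp
  obtain ⟨m, hm⟩ := hint p ((hQ p).1 hp).1
  have e1 : ⌊h (u - p)⌋ = (K : ℤ) + 1 - m := by
    rw [map_sub, hu, hm]
    have : ((K : ℝ) + 1 - m) = (((K : ℤ) + 1 - m : ℤ) : ℝ) := by push_cast; ring
    rw [this, Int.floor_intCast]
  rw [e1, hm, Int.floor_intCast, ← bf_neg]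
  congr 1
  push_cast
  ring

end EM

namespace EM

open Finset

variable {ι : Type*} [Fintype ι] [DecidableEq ι] {E : Type*} [AddCommGroup E] [Module ℝ E]

lemma scalar_eps (α β : ℝ) (hβ : β ≠ 0) : ∀ᶠ ε in nhdsWithin (0:ℝ) (Set.Ioi 0),
    α + ε * β ≠ 0 ∧ (0 < α + ε * β ↔ (β < 0 → 0 < α) ∧ (¬ β < 0 → 0 ≤ α)) := by
  have htend : Filter.Tendsto (fun ε : ℝ => α + ε * β) (nhdsWithin (0:ℝ) (Set.Ioi 0))
      (nhds (α + 0 * β)) := by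
    apply Filter.Tendsto.mono_left _ nhdsWithin_le_nhds
    apply Continuous.tendsto; fun_prop
  rw [zero_mul, add_zero] at htend
  rcases lt_trichotomy α 0 with hα | hα | hα
  · filter_upwards [htend.eventually (gt_mem_nhds hα)] with ε hε
    refine ⟨hε.ne, ?_⟩
    constructor
    · intro h; linarith
    · rintro ⟨h1, h2⟩
      by_cases hb : β < 0
      · have := h1 hb; linarith
      · have := h2 hb; linarith
  · subst hα
    filter_upwards [self_mem_nhdsWithin] with ε hε
    have hε' : 0 < ε := hε
    rw [zero_add]
    refine ⟨mul_ne_zero hε'.ne' hβ, ?_⟩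
    rw [mul_pos_iff_of_pos_left hε']
    constructor
    · intro h; exact ⟨fun h' => by linarith, fun _ => le_rfl⟩
    · rintro ⟨h1, _⟩
      by_contra hb
      exact lt_irrefl _ (h1 (lt_of_le_of_ne (not_lt.mp hb) hβ))
  · filter_upwards [htend.eventually (lt_mem_nhds hα)] with ε hε
    exact ⟨hε.ne', fun _ => ⟨fun _ => hα, fun _ => hα.le⟩, fun _ => hε⟩

lemma eps_lemma (v : ι → E) (c : Finset ι → E →ₗ[ℝ] (ι → ℝ)) (q : E)
    (hq : ∀ B, IsB v B → ∀ i ∈ B, c B q i ≠ 0) (x : E) :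
    ∀ᶠ ε in nhdsWithin (0:ℝ) (Set.Ioi 0),
      (∀ B, IsB v B → ∀ i ∈ B, c B (x + ε • q) i ≠ 0) ∧
      (∀ B, IsB v B → ((∀ i ∈ B, 0 < c B (x + ε • q) i) ↔
        HO B (c B) (fun i => c B q i < 0) x)) := by
  have : ∀ᶠ ε in nhdsWithin (0:ℝ) (Set.Ioi 0), ∀ B : Finset ι, ∀ i : ι, IsB v B → i ∈ B →
      c B x i + ε * c B q i ≠ 0 ∧ (0 < c B x i + ε * c B q i ↔
        (c B q i < 0 → 0 < c B x i) ∧ (¬ c B q i < 0 → 0 ≤ c B x i)) := by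
    rw [Filter.eventually_all]
    intro B
    rw [Filter.eventually_all]
    intro i
    by_cases hB : IsB v B
    · by_cases hi : i ∈ B
      · filter_upwards [scalar_eps (c B x i) (c B q i) (hq B hB i hi)] with ε h _ _
        exact h
      · exact Filter.Eventually.of_forall (by tauto)
    · exact Filter.Eventually.of_forall (by tauto)
  filter_upwards [this] with ε hε
  have e : ∀ B i, c B (x + ε • q) i = c B x i + ε * c B q i := by intro B i; simp
  simp only [e]
  refine ⟨fun B hB i hi => (hε B i hB hi).1, fun B hB => ?_⟩
  unfold HO
  exact forall₂_congr fun i hi => (hε B i hB hi).2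

lemma ncard_decomp {α β : Type*} (T : Finset β) (A : Set α) (F : β → Set α) (hA : A.Finite)
    (hcov : ∀ x, x ∈ A ↔ ∃ B ∈ T, x ∈ F B)
    (hdis : ∀ x, ∀ B ∈ T, ∀ B' ∈ T, x ∈ F B → x ∈ F B' → B = B') :
    A.ncard = ∑ B ∈ T, (F B).ncard := by
  classical
  have hF : ∀ B ∈ T, (F B).Finite := fun B hB => hA.subset fun x hx => (hcov x).2 ⟨B, hB, hx⟩
  let G : β → Finset α := fun B => if h : (F B).Finite then h.toFinset else ∅
  have hG : ∀ B ∈ T, ∀ x, x ∈ G B ↔ x ∈ F B := by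
    intro B hB x
    simp [G, hF B hB]
  have hA' : A = (T.biUnion G : Finset α) := by
    ext x
    rw [hcov, mem_coe, mem_biUnion]
    exact exists_congr fun B => and_congr_right fun hB => (hG B hB x).symm
  rw [hA', Set.ncard_coe_finset, card_biUnion]
  · apply Finset.sum_congr rfl
    intro B hB
    rw [← Set.ncard_coe_finset]
    congr 1
    ext x
    exact hG B hB x
  · intro B hB B' hB' hne
    refine Finset.disjoint_left.mpr ?_
    intro x hx hx'
    exact hne (hdis x B hB B' hB' ((hG B hB x).1 hx) ((hG B' hB' x).1 hx'))

theorem cone_recip [Nonempty ι] (v : ι → E) (hspan : Submodule.span ℝ (Set.range v) = ⊤)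
    (Λ : AddSubgroup E) (hv : ∀ i, v i ∈ Λ) (h : E →ₗ[ℝ] ℝ) (h1 : ∀ i, h (v i) = 1)
    (hint : ∀ x ∈ Λ, ∃ m : ℤ, h x = m)
    (hfin : ∀ t : ℕ, {x | x ∈ Λ ∧ h x = t ∧ ∃ a : ι → ℝ, (∀ i, 0 ≤ a i) ∧
      ∑ i, a i • v i = x}.Finite)
    (K : ℕ) (hK : Module.finrank ℝ E = K + 1) (L : Polynomial ℚ)
    (hL : ∀ t : ℕ, 0 < t → L.eval (t : ℚ) = Set.ncard {x | x ∈ Λ ∧ h x = t ∧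
      ∃ a : ι → ℝ, (∀ i, 0 ≤ a i) ∧ ∑ i, a i • v i = x}) (t : ℕ) (ht : 0 < t) :
    (-1 : ℚ) ^ K * L.eval (-(t : ℚ)) = Set.ncard {x | x ∈ Λ ∧ h x = t ∧
      ∃ a : ι → ℝ, (∀ i, 0 < a i) ∧ ∑ i, a i • v i = x} := by
  classical
  have hex : ∀ B : Finset ι, ∃ c : E →ₗ[ℝ] (ι → ℝ), IsB v B → IsC v B c := by
    intro B
    by_cases hB : IsB v B
    · obtain ⟨⟨c, hc⟩, -⟩ := hB.exists_c
      exact ⟨c, fun _ => hc⟩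
    · exact ⟨0, fun h => absurd h hB⟩
  choose c hc using hex
  obtain ⟨T, hT, hTu, hTe⟩ := exists_triang v hspan h h1 c hc
  -- generic positive vector
  obtain ⟨a, ha, haF⟩ := generic
    ((univ : Finset (Finset ι × ι)).filter fun p => IsB v p.1 ∧ p.2 ∈ p.1)
    (fun p j => c p.1 (v j) p.2) (by
      rintro ⟨B, i⟩ hp h0
      simp only [mem_filter, mem_univ, true_and] at hp
      have := congrFun h0 i
      simp [(hc B hp.1).single i hp.2] at this)
  let q : E := ∑ i, a i • v i
  have hq : ∀ B, IsB v B → ∀ i ∈ B, c B q i ≠ 0 := by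
    intro B hB i hi
    have := haF (B, i) (by simp [hB, hi])
    simp only [q, map_sum, map_smul, Finset.sum_apply, Pi.smul_apply, smul_eq_mul]
    simpa only [mul_comm] using this
  have hq' : ∀ B, IsB v B → ∀ i ∈ B, c B (-q) i ≠ 0 := by
    intro B hB i hi
    simpa using hq B hB i hi
  -- general disjointness
  have hdis : ∀ r : E, (∀ B, IsB v B → ∀ i ∈ B, c B r i ≠ 0) → ∀ x, ∀ B ∈ T, ∀ B' ∈ T,
      HO B (c B) (fun i => c B r i < 0) x → HO B' (c B') (fun i => c B' r i < 0) x → B = B' := by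
    intro r hr x B hB B' hB' hx hx'
    obtain ⟨ε, -, hε⟩ := (eps_lemma v c r hr x).exists
    exact hTu _ B hB B' hB' ((hε B (hT B hB)).2 hx) ((hε B' (hT B' hB')).2 hx')
  have hnn : ∀ B, IsB v B → ∀ S x, HO B (c B) S x → ∀ i, 0 ≤ c B x i := by
    intro B hB S x hx i
    by_cases hi : i ∈ B
    · by_cases hS : S i
      · exact ((hx i hi).1 hS).le
      · exact (hx i hi).2 hS
    · rw [(hc B hB).zero x i hi]
  -- closed cone
  have hcovC : ∀ x, (∃ b : ι → ℝ, (∀ i, 0 ≤ b i) ∧ ∑ i, b i • v i = x) ↔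
      ∃ B ∈ T, HO B (c B) (fun i => c B q i < 0) x := by
    intro x
    constructor
    · rintro ⟨b, hb, hbx⟩
      obtain ⟨ε, ⟨hε1, hε2⟩, hε0⟩ := ((eps_lemma v c q hq x).and self_mem_nhdsWithin).exists
      have hε0' : 0 < ε := hε0
      obtain ⟨B, hB, hBp⟩ := hTe (x + ε • q) hε1 ⟨fun i => b i + ε * a i, fun i =>
        add_nonneg (hb i) (mul_nonneg hε0'.le (ha i).le), by
          simp only [add_smul, Finset.sum_add_distrib, mul_smul, hbx, ← Finset.smul_sum, q]⟩
      exact ⟨B, hB, (hε2 B (hT B hB)).1 hBp⟩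
    · rintro ⟨B, hB, hx⟩
      exact ⟨c B x, hnn B (hT B hB) _ x hx, (hc B (hT B hB)).sum x⟩
  have hcovI : ∀ x, (∃ b : ι → ℝ, (∀ i, 0 < b i) ∧ ∑ i, b i • v i = x) ↔
      ∃ B ∈ T, HO B (c B) (fun i => c B (-q) i < 0) x := by
    intro x
    constructor
    · rintro ⟨b, hb, hbx⟩
      have hsmall : ∀ᶠ ε in nhdsWithin (0:ℝ) (Set.Ioi 0), ∀ i, 0 < b i - ε * a i := by
        rw [Filter.eventually_all]
        intro i
        apply Filter.Eventually.filter_mono nhdsWithin_le_nhds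
        have : Filter.Tendsto (fun ε : ℝ => b i - ε * a i) (nhds 0)
            (nhds (b i - 0 * a i)) := by
          apply Continuous.tendsto; fun_prop
        exact this.eventually (lt_mem_nhds (by simpa using hb i))
      obtain ⟨ε, ⟨hε1, hε2⟩, hε0⟩ := ((eps_lemma v c (-q) hq' x).and hsmall).exists
      obtain ⟨B, hB, hBp⟩ := hTe (x + ε • (-q)) hε1 ⟨fun i => b i - ε * a i, fun i =>
        (hε0 i).le, by
          simp only [sub_smul, Finset.sum_sub_distrib, mul_smul, hbx, ← Finset.smul_sum, q,
            smul_neg]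
          exact sub_eq_add_neg _ _⟩
      exact ⟨B, hB, (hε2 B (hT B hB)).1 hBp⟩
    · rintro ⟨B, hB, hx⟩
      obtain ⟨ε, ⟨hε1, hε2⟩, hε0⟩ := ((eps_lemma v c (-q) hq' x).and self_mem_nhdsWithin).exists
      have hε0' : 0 < ε := hε0
      have hp := (hε2 B (hT B hB)).2 hx
      have hn : ∀ i, 0 ≤ c B (x + ε • (-q)) i := by
        intro i
        by_cases hi : i ∈ B
        · exact (hp i hi).le
        · rw [(hc B (hT B hB)).zero _ i hi]
      refine ⟨fun i => c B (x + ε • (-q)) i + ε * a i, fun i =>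
        add_pos_of_nonneg_of_pos (hn i) (mul_pos hε0' (ha i)), ?_⟩
      simp only [add_smul, Finset.sum_add_distrib, (hc B (hT B hB)).sum, mul_smul,
        ← Finset.smul_sum]
      simp [q]
  -- polynomials
  have hpol : ∀ B, ∃ p : Polynomial ℚ, B ∈ T → ∀ t : ℕ, 0 < t →
      p.eval (t : ℚ) = Set.ncard {x | x ∈ Λ ∧ h x = t ∧ HO B (c B) (fun i => c B q i < 0) x} ∧
      (-1) ^ K * p.eval (-(t : ℚ)) =
        Set.ncard {x | x ∈ Λ ∧ h x = t ∧ HO B (c B) (fun i => ¬ c B q i < 0) x} := by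
    intro B
    by_cases hB : B ∈ T
    · obtain ⟨p, hp⟩ := recip (hc B (hT B hB)) Λ hv h h1 hint hfin K
        (((hT B hB).exists_c).2.trans hK) (fun i => c B q i < 0)
      exact ⟨p, fun _ => hp⟩
    · exact ⟨0, fun h => absurd h hB⟩
  choose p hp using hpol
  have hLp : L = ∑ B ∈ T, p B := by
    apply Polynomial.eq_of_infinite_eval_eq
    apply Set.Infinite.mono (s := Set.range fun n : ℕ => ((n + 1 : ℕ) : ℚ))
    · rintro _ ⟨n, rfl⟩
      simp only [Set.mem_ofPred_eq]
      rw [hL _ (Nat.succ_pos n), Polynomial.eval_finsetSum,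
        ncard_decomp T _ (fun B => {x | x ∈ Λ ∧ h x = (n + 1 : ℕ) ∧
          HO B (c B) (fun i => c B q i < 0) x}) (hfin (n + 1))]
      · push_cast
        apply Finset.sum_congr rfl
        intro B hB
        have := (hp B hB (n + 1) (Nat.succ_pos n)).1
        push_cast at this
        exact this.symm
      · intro x
        simp only [Set.mem_ofPred_eq, hcovC]
        constructor
        · rintro ⟨h1, h2, B, h3, h4⟩; exact ⟨B, h3, h1, h2, h4⟩
        · rintro ⟨B, h3, h1, h2, h4⟩; exact ⟨h1, h2, B, h3, h4⟩
      · intro x B hB B' hB' hx hx'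
        exact hdis q hq x B hB B' hB' hx.2.2 hx'.2.2
    · apply Set.infinite_range_of_injective
      intro m n hmn
      simpa using hmn
  rw [hLp, Polynomial.eval_finsetSum, Finset.mul_sum,
    ncard_decomp T _ (fun B => {x | x ∈ Λ ∧ h x = t ∧
          HO B (c B) (fun i => c B (-q) i < 0) x}) ((hfin t).subset ?_)]
  · push_cast
    apply Finset.sum_congr rfl
    intro B hB
    rw [(hp B hB t ht).2]
    congr 2
    ext x
    simp only [Set.mem_ofPred_eq]
    refine and_congr_right fun _ => and_congr_right fun _ => ?_
    unfold HO
    refine forall₂_congr fun i hi => ?_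
    have hne := hq B (hT B hB) i hi
    have : (¬ c B q i < 0) ↔ c B (-q) i < 0 := by
      rw [map_neg, Pi.neg_apply, not_lt, neg_lt_zero]
      exact ⟨fun h => lt_of_le_of_ne h hne.symm, le_of_lt⟩
    simp only [this]
  · intro x
    simp only [Set.mem_ofPred_eq, hcovI]
    constructor
    · rintro ⟨h1, h2, B, h3, h4⟩; exact ⟨B, h3, h1, h2, h4⟩
    · rintro ⟨B, h3, h1, h2, h4⟩; exact ⟨h1, h2, B, h3, h4⟩
  · intro x B hB B' hB' hx hx'
    exact hdis (-q) hq' x B hB B' hB' hx.2.2 hx'.2.2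
  · rintro x ⟨h1, h2, b, hb, hbx⟩
    exact ⟨h1, h2, b, fun i => (hb i).le, hbx⟩

end EM

namespace EM

open Finset

section hull

variable {ι : Type*} [Fintype ι] {F : Type*} [NormedAddCommGroup F] [NormedSpace ℝ F]

lemma mem_hull (w : ι → F) (x : F) : x ∈ convexHull ℝ (Set.range w) ↔
    ∃ a : ι → ℝ, (∀ i, 0 ≤ a i) ∧ ∑ i, a i = 1 ∧ ∑ i, a i • w i = x := by
  classical
  constructor
  · intro hx
    have hsub : convexHull ℝ (Set.range w) ⊆
        {x | ∃ a : ι → ℝ, (∀ i, 0 ≤ a i) ∧ ∑ i, a i = 1 ∧ ∑ i, a i • w i = x} := by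
      apply convexHull_min
      · rintro _ ⟨i, rfl⟩
        refine ⟨Pi.single i 1, fun j => ?_, by simp, by simp [Pi.single_apply]⟩
        rw [Pi.single_apply]; split_ifs <;> norm_num
      · rintro x ⟨a, ha, ha1, rfl⟩ y ⟨b, hb, hb1, rfl⟩ s t hs ht hst
        refine ⟨fun i => s * a i + t * b i, fun i => ?_, ?_, ?_⟩
        · exact add_nonneg (mul_nonneg hs (ha i)) (mul_nonneg ht (hb i))
        · rw [Finset.sum_add_distrib, ← Finset.mul_sum, ← Finset.mul_sum, ha1, hb1]
          simpa using hst
        · simp only [add_smul, mul_smul, Finset.sum_add_distrib, ← Finset.smul_sum]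
    exact hsub hx
  · rintro ⟨a, ha, ha1, hax⟩
    exact mem_convexHull_of_exists_fintype a w ha ha1 (fun i => Set.mem_range_self i) hax

lemma mem_relint (P : Set F) (x : F) : x ∈ intrinsicInterior ℝ P ↔
    x ∈ affineSpan ℝ P ∧ ∃ U : Set F, IsOpen U ∧ x ∈ U ∧
      ∀ u ∈ U, u ∈ affineSpan ℝ P → u ∈ P := by
  rw [mem_intrinsicInterior]
  constructor
  · rintro ⟨y, hy, rfl⟩
    refine ⟨y.2, ?_⟩
    rw [mem_interior] at hy
    obtain ⟨t, ht, hto, hyt⟩ := hy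
    obtain ⟨U, hU, rfl⟩ := isOpen_induced_iff.mp hto
    exact ⟨U, hU, hyt, fun u hu hua => ht (show (⟨u, hua⟩ : affineSpan ℝ P) ∈ _ from hu)⟩
  · rintro ⟨hx, U, hU, hxU, hsub⟩
    refine ⟨⟨x, hx⟩, ?_, rfl⟩
    rw [mem_interior]
    exact ⟨Subtype.val ⁻¹' U, fun u hu => hsub u hu u.2, isOpen_induced hU, hxU⟩

lemma relint_hull [FiniteDimensional ℝ F] [Nonempty ι] (w : ι → F) (x : F) :
    x ∈ intrinsicInterior ℝ (convexHull ℝ (Set.range w)) ↔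
    ∃ a : ι → ℝ, (∀ i, 0 < a i) ∧ ∑ i, a i = 1 ∧ ∑ i, a i • w i = x := by
  set P := convexHull ℝ (Set.range w) with hP
  have hPc : Convex ℝ P := convex_convexHull ℝ _
  have hsubA : ∀ y ∈ P, y ∈ affineSpan ℝ P := fun y hy => subset_affineSpan ℝ P hy
  constructor
  · intro hx
    rw [mem_relint] at hx
    obtain ⟨hxA, U, hU, hxU, hsub⟩ := hx
    let m : ℝ := Fintype.card ι
    have hm : 0 < m := by simp only [m]; exact_mod_cast Fintype.card_pos
    let z : F := ∑ i : ι, m⁻¹ • w i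
    have hz : z ∈ P := by
      rw [hP, mem_hull]
      refine ⟨fun _ => m⁻¹, fun _ => (inv_pos.mpr hm).le, ?_, rfl⟩
      simp only [sum_const, nsmul_eq_mul, card_univ]
      exact mul_inv_cancel₀ hm.ne'
    have hev : ∀ᶠ δ in nhdsWithin (0:ℝ) (Set.Ioi 0), AffineMap.lineMap x z (-δ) ∈ U := by
      apply Filter.Eventually.filter_mono nhdsWithin_le_nhds
      have hcont : Continuous fun δ : ℝ => (AffineMap.lineMap x z (-δ) : F) := by
        simp only [AffineMap.lineMap_apply_module']
        fun_prop
      have := hcont.tendsto 0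
      exact this.eventually (hU.mem_nhds (by simpa using hxU))
    obtain ⟨δ, hδU, hδ⟩ := (hev.and self_mem_nhdsWithin).exists
    have hδ' : 0 < δ := hδ
    have hp := hsub _ hδU (AffineMap.lineMap_mem _ hxA (hsubA z hz))
    rw [hP, mem_hull] at hp
    obtain ⟨b, hb, hb1, hbx⟩ := hp
    have hne : (1 + δ) ≠ 0 := by positivity
    refine ⟨fun i => (1 + δ)⁻¹ * (b i + δ * m⁻¹), fun i => ?_, ?_, ?_⟩
    · have := hb i
      have h2 : 0 < δ * m⁻¹ := by positivity
      have h3 : 0 < (1 + δ)⁻¹ := by positivity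
      exact mul_pos h3 (by linarith)
    · rw [← Finset.mul_sum, Finset.sum_add_distrib, hb1]
      simp only [sum_const, nsmul_eq_mul, card_univ]
      change (1 + δ)⁻¹ * (1 + m * (δ * m⁻¹)) = 1
      field_simp
    · simp only [mul_smul, add_smul, ← Finset.smul_sum, Finset.sum_add_distrib, hbx]
      rw [Finset.smul_sum]
      change (1 + δ)⁻¹ • (AffineMap.lineMap x z (-δ) + δ • z) = x
      rw [inv_smul_eq_iff₀ hne, AffineMap.lineMap_apply_module']
      module
  · rintro ⟨a, ha, ha1, hax⟩
    have hPne : P.Nonempty := ((Set.range_nonempty w).mono (subset_convexHull ℝ _))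
    obtain ⟨z, hz⟩ := hPne.intrinsicInterior hPc
    have hzP := intrinsicInterior_subset hz
    rw [mem_relint] at hz ⊢
    obtain ⟨hzA, U, hU, hzU, hsub⟩ := hz
    rw [hP, mem_hull] at hzP
    obtain ⟨b, hb, hb1, hbz⟩ := hzP
    have hev : ∀ᶠ s in nhdsWithin (0:ℝ) (Set.Ioi 0), (∀ i, 0 < a i - s * b i) ∧ s < 1 := by
      apply Filter.Eventually.filter_mono nhdsWithin_le_nhds
      apply Filter.Eventually.and _ (gt_mem_nhds one_pos)
      rw [Filter.eventually_all]
      intro i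
      have : Filter.Tendsto (fun s : ℝ => a i - s * b i) (nhds 0)
          (nhds (a i - 0 * b i)) := by
        apply Continuous.tendsto; fun_prop
      exact this.eventually (lt_mem_nhds (by simpa using ha i))
    obtain ⟨s, ⟨hsa, hs1⟩, hs0⟩ := (hev.and self_mem_nhdsWithin).exists
    have hs0' : 0 < s := hs0
    have h1s : 0 < 1 - s := by linarith
    let p : F := (1 - s)⁻¹ • (x - s • z)
    have hpP : p ∈ P := by
      rw [hP, mem_hull]
      refine ⟨fun i => (1 - s)⁻¹ * (a i - s * b i), fun i => ?_, ?_, ?_⟩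
      · exact (mul_pos (inv_pos.mpr h1s) (hsa i)).le
      · rw [← Finset.mul_sum, Finset.sum_sub_distrib, ← Finset.mul_sum, ha1, hb1, mul_one]
        exact inv_mul_cancel₀ h1s.ne'
      · simp only [mul_smul, sub_smul, ← Finset.smul_sum, Finset.sum_sub_distrib, hax, hbz]
        rfl
    have hxp : x = s • z + (1 - s) • p := by
      simp only [p]
      rw [smul_inv_smul₀ h1s.ne']; abel
    refine ⟨hsubA x ?_, (fun u => AffineMap.lineMap p u s⁻¹) ⁻¹' U, ?_, ?_, ?_⟩
    · rw [hP, mem_hull]; exact ⟨a, fun i => (ha i).le, ha1, hax⟩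
    · apply hU.preimage
      simp only [AffineMap.lineMap_apply_module']
      fun_prop
    · have : (AffineMap.lineMap p x s⁻¹ : F) = z := by
        rw [AffineMap.lineMap_apply_module', hxp]
        have : s • z + (1 - s) • p - p = s • (z - p) := by module
        rw [this, inv_smul_smul₀ hs0'.ne']; abel
      simpa [Set.mem_preimage, this] using hzU
    · intro u hu huA
      have h2 := hsub _ hu (AffineMap.lineMap_mem _ (hsubA p hpP) huA)
      have h3 := hPc h2 hpP hs0'.le h1s.le (by ring)
      convert h3 using 1
      beta_reduce
      rw [AffineMap.lineMap_apply_module', smul_add, smul_inv_smul₀ hs0'.ne']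
      module

end hull

section final

variable {ι : Type*} [Fintype ι] {n : ℕ}

/-- The homogenized span. -/
abbrev WS (w : ι → Fin n → ℝ) : Submodule ℝ ((Fin n → ℝ) × ℝ) :=
  Submodule.span ℝ (Set.range fun i => (w i, (1 : ℝ)))

/-- The homogenized vectors. -/
def hv (w : ι → Fin n → ℝ) (i : ι) : WS w :=
  ⟨(w i, 1), Submodule.subset_span ⟨i, rfl⟩⟩

/-- The height. -/
def ht (w : ι → Fin n → ℝ) : WS w →ₗ[ℝ] ℝ := LinearMap.snd ℝ _ _ ∘ₗ (WS w).subtype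

/-- The base projection. -/
def pr (w : ι → Fin n → ℝ) : WS w →ₗ[ℝ] (Fin n → ℝ) := LinearMap.fst ℝ _ _ ∘ₗ (WS w).subtype

lemma hv_span (w : ι → Fin n → ℝ) : Submodule.span ℝ (Set.range (hv w)) = ⊤ := by
  apply Submodule.map_injective_of_injective (WS w).injective_subtype
  rw [Submodule.map_span, ← Set.range_comp, Submodule.map_top, Submodule.range_subtype]
  rfl

lemma ext_W (w : ι → Fin n → ℝ) (x y : WS w) (h1 : pr w x = pr w y) (h2 : ht w x = ht w y) :
    x = y := Subtype.ext (Prod.ext h1 h2)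

lemma pr_hv (w : ι → Fin n → ℝ) (i : ι) : pr w (hv w i) = w i := rfl
lemma ht_hv (w : ι → Fin n → ℝ) (i : ι) : ht w (hv w i) = 1 := rfl

lemma finrank_W [Nonempty ι] (w : ι → Fin n → ℝ) :
    Module.finrank ℝ (WS w) =
      Module.finrank ℝ (affineSpan ℝ (convexHull ℝ (Set.range w))).direction + 1 := by
  let i₀ : ι := Classical.arbitrary ι
  rw [affineSpan_convexHull, direction_affineSpan, ← LinearMap.finrank_range_add_finrank_ker (ht w)]
  have hsurj : LinearMap.range (ht w) = ⊤ := by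
    rw [LinearMap.range_eq_top]
    intro r
    exact ⟨r • hv w i₀, by simp [ht_hv]⟩
  rw [hsurj, finrank_top, Module.finrank_self, add_comm]
  congr 1
  let g : LinearMap.ker (ht w) →ₗ[ℝ] (Fin n → ℝ) := pr w ∘ₗ (LinearMap.ker (ht w)).subtype
  have hg : Function.Injective g := by
    intro x y hxy
    apply Subtype.ext
    exact ext_W w _ _ hxy (by rw [LinearMap.mem_ker.mp x.2, LinearMap.mem_ker.mp y.2])
  rw [← LinearMap.finrank_range_of_inj hg]
  have : LinearMap.range g = vectorSpan ℝ (Set.range w) := by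
    apply le_antisymm
    · rintro _ ⟨⟨x, hx⟩, rfl⟩
      have hxs : x ∈ Submodule.span ℝ (Set.range (hv w)) := by rw [hv_span]; trivial
      obtain ⟨a, rfl⟩ := (Submodule.mem_span_range_iff_exists_fun ℝ).mp hxs
      have hsum : ∑ i, a i = 0 := by
        have := LinearMap.mem_ker.mp hx
        simpa [ht_hv] using this
      have : g ⟨∑ i, a i • hv w i, hx⟩ = ∑ i, a i • (w i - w i₀) := by
        simp only [smul_sub, Finset.sum_sub_distrib, ← Finset.sum_smul, hsum, zero_smul, sub_zero]
        change pr w (∑ i, a i • hv w i) = _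
        simp [pr_hv]
      rw [this]
      apply Submodule.sum_mem
      intro i _
      exact Submodule.smul_mem _ _
        (vsub_mem_vectorSpan ℝ (Set.mem_range_self i) (Set.mem_range_self i₀))
    · rw [vectorSpan_range_eq_span_range_vsub_right ℝ w i₀, Submodule.span_le]
      rintro _ ⟨i, rfl⟩
      refine ⟨⟨hv w i - hv w i₀, by simp [LinearMap.mem_ker, ht_hv]⟩, ?_⟩
      change pr w (hv w i - hv w i₀) = _
      simp [pr_hv]
  rw [this]

/-- Integral points of the homogenized span. -/
def lat (w : ι → Fin n → ℝ) : AddSubgroup (WS w) where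
  carrier := {x | (∀ i, ∃ m : ℤ, pr w x i = m) ∧ ∃ m : ℤ, ht w x = m}
  zero_mem' := ⟨fun i => ⟨0, by simp⟩, 0, by simp⟩
  add_mem' := by
    rintro x y ⟨hx, m, hm⟩ ⟨hy, k, hk⟩
    refine ⟨fun i => ?_, m + k, by simp [hm, hk]⟩
    obtain ⟨a, ha⟩ := hx i
    obtain ⟨b, hb⟩ := hy i
    exact ⟨a + b, by simp [ha, hb]⟩
  neg_mem' := by
    rintro x ⟨hx, m, hm⟩
    refine ⟨fun i => ?_, -m, by simp [hm]⟩
    obtain ⟨a, ha⟩ := hx i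
    exact ⟨-a, by simp [ha]⟩

lemma mem_lat (w : ι → Fin n → ℝ) (x : WS w) : x ∈ lat w ↔
    (∀ i, ∃ m : ℤ, pr w x i = m) ∧ ∃ m : ℤ, ht w x = m := Iff.rfl

lemma count_eq (w : ι → Fin n → ℝ) (R : ℝ → Prop) (hR : ∀ s a : ℝ, 0 < s → R a → R (s * a))
    (Q : Set (Fin n → ℝ)) (hQ : ∀ x, x ∈ Q ↔ ∃ a : ι → ℝ, (∀ i, R (a i)) ∧ ∑ i, a i = 1 ∧
      ∑ i, a i • w i = x) (t : ℕ) (ht0 : 0 < t) :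
    latticeCount ((t : ℝ) • Q) = Set.ncard {x | x ∈ lat w ∧ ht w x = t ∧
      ∃ a : ι → ℝ, (∀ i, R (a i)) ∧ ∑ i, a i • hv w i = x} := by
  have htp : (0 : ℝ) < t := by exact_mod_cast ht0
  rw [← Set.ncard_image_of_injOn (f := pr w)]
  · unfold latticeCount
    congr 1
    ext x
    simp only [Set.mem_ofPred_eq, Set.mem_image]
    constructor
    · rintro ⟨hx, hxi⟩
      obtain ⟨y, hy, rfl⟩ := Set.mem_smul_set.mp hx
      obtain ⟨a, ha, ha1, hay⟩ := (hQ y).1 hy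
      have e1 : pr w (∑ i, (t * a i) • hv w i) = (t : ℝ) • y := by
        simp [pr_hv, mul_smul, ← Finset.smul_sum, hay]
      have e2 : ht w (∑ i, (t * a i) • hv w i) = t := by
        simp [ht_hv, ← Finset.mul_sum, ha1]
      refine ⟨∑ i, (t * a i) • hv w i, ⟨?_, e2, fun i => t * a i, fun i => hR _ _ htp (ha i), rfl⟩,
        e1⟩
      rw [mem_lat, e1, e2]
      exact ⟨hxi, t, by simp⟩
    · rintro ⟨x, ⟨hx, hxt, a, ha, rfl⟩, rfl⟩
      refine ⟨?_, hx.1⟩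
      rw [Set.mem_smul_set]
      have hs : ∑ i, a i = t := by simpa [ht_hv] using hxt
      refine ⟨(t : ℝ)⁻¹ • pr w (∑ i, a i • hv w i), (hQ _).2 ⟨fun i => (t : ℝ)⁻¹ * a i,
        fun i => hR _ _ (inv_pos.mpr htp) (ha i), ?_, ?_⟩, smul_inv_smul₀ htp.ne' _⟩
      · rw [← Finset.mul_sum, hs]; exact inv_mul_cancel₀ htp.ne'
      · simp [pr_hv, mul_smul, ← Finset.smul_sum]
  · rintro x ⟨_, hx, _⟩ y ⟨_, hy, _⟩ hxy
    exact ext_W w x y hxy (hx.trans hy.symm)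

lemma fin_lat (w : ι → Fin n → ℝ) (t : ℕ) : {x | x ∈ lat w ∧ ht w x = t ∧
      ∃ a : ι → ℝ, (∀ i, 0 ≤ a i) ∧ ∑ i, a i • hv w i = x}.Finite := by
  apply Set.Finite.of_finite_image (f := pr w)
  · let N : Fin n → ℤ := fun j => ⌈∑ i, (t : ℝ) * |w i j|⌉
    apply Set.Finite.subset ((Set.finite_Icc (-N) N).image fun (k : Fin n → ℤ) j => (k j : ℝ))
    rintro _ ⟨x, ⟨hx, hxt, a, ha, hax⟩, rfl⟩
    choose k hk using hx.1
    refine ⟨k, ?_, funext fun j => (hk j).symm⟩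
    have hs : ∑ i, a i = t := by
      rw [← hax] at hxt
      simpa [ht_hv] using hxt
    have hat : ∀ i, a i ≤ t := fun i => by
      rw [← hs]; exact Finset.single_le_sum (fun i _ => ha i) (mem_univ i)
    have hb : ∀ j, |(k j : ℝ)| ≤ N j := by
      intro j
      refine le_trans ?_ (Int.le_ceil _)
      rw [← hk j, ← hax]
      simp only [map_sum, map_smul, pr_hv, Finset.sum_apply, Pi.smul_apply, smul_eq_mul]
      refine (Finset.abs_sum_le_sum_abs _ _).trans (Finset.sum_le_sum fun i _ => ?_)
      rw [abs_mul, abs_of_nonneg (ha i)]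
      exact mul_le_mul_of_nonneg_right (hat i) (abs_nonneg _)
    have hb' : ∀ j, |k j| ≤ N j := fun j => by exact_mod_cast hb j
    exact ⟨fun j => (abs_le.mp (hb' j)).1, fun j => (abs_le.mp (hb' j)).2⟩
  · rintro x ⟨_, hx, _⟩ y ⟨_, hy, _⟩ hxy
    exact ext_W w x y hxy (hx.trans hy.symm)

end final

end EM

theorem stmt12 (n d : ℕ) (V : Finset (Fin n → ℤ)) (hV : V.Nonempty)
    (P : Set (Fin n → ℝ))
    (hP : P = convexHull ℝ ((fun (v : Fin n → ℤ) (i : Fin n) => (v i : ℝ)) '' V))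
    (hd : Module.finrank ℝ (affineSpan ℝ P).direction = d)
    (L : Polynomial ℚ)
    (hL : ∀ t : ℕ, 0 < t → L.eval (t : ℚ) = latticeCount ((t : ℝ) • P)) :
    ∀ t : ℕ, 0 < t →
      (-1 : ℚ) ^ d * L.eval (-(t : ℚ)) =
        latticeCount ((t : ℝ) • intrinsicInterior ℝ P) := by
  classical
  haveI : Nonempty V := hV.to_subtype
  let w : V → Fin n → ℝ := fun v i => ((v : Fin n → ℤ) i : ℝ)
  have hPw : P = convexHull ℝ (Set.range w) := by
    rw [hP, Set.image_eq_range]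
    rfl
  have hPm := fun x => EM.mem_hull w x
  have hIm := fun x => EM.relint_hull w x
  rw [← hPw] at hPm hIm
  have hR1 : ∀ s a : ℝ, 0 < s → 0 ≤ a → 0 ≤ s * a := fun s a hs ha => mul_nonneg hs.le ha
  have hR2 : ∀ s a : ℝ, 0 < s → 0 < a → 0 < s * a := fun s a hs ha => mul_pos hs ha
  intro t ht
  rw [EM.count_eq w (fun a => 0 < a) hR2 _ hIm t ht]
  refine EM.cone_recip (EM.hv w) (EM.hv_span w) (EM.lat w) ?_ (EM.ht w) (EM.ht_hv w)
    (fun x hx => hx.2) (EM.fin_lat w) d ?_ L ?_ t ht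
  · intro i
    exact ⟨fun j => ⟨(i : Fin n → ℤ) j, rfl⟩, 1, by simp [EM.ht_hv]⟩
  · rw [EM.finrank_W w, ← hPw, hd]
  · intro s hs
    rw [hL s hs, EM.count_eq w (fun a => 0 ≤ a) hR1 _ hPm s hs]
end

section
/- Let P ⊂ ℝⁿ be an integral polytope of dimension d with Ehrhart polynomial L_P. Then L_P(0) = 1. -/
open Pointwise

/-- Lexicographic positivity with respect to a list of coordinates. -/
def LexPos {I : Type*} : List I → (I → ℝ) → Prop
  | [], _ => False
  | i :: l, r => 0 < r i ∨ (r i = 0 ∧ LexPos l r)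

lemma lexPos_tri {I : Type*} (l : List I) (r : I → ℝ) :
    (∀ i ∈ l, r i = 0) ∨ LexPos l r ∨ LexPos l (-r) := by
  induction l with
  | nil => left; simp
  | cons a l ih =>
    rcases lt_trichotomy (r a) 0 with h | h | h
    · right; right; left; simpa using h
    · rcases ih with h1 | h1 | h1
      · left; intro i hi
        rcases List.mem_cons.1 hi with rfl | hi
        · exact h
        · exact h1 i hi
      · right; left; right; exact ⟨h, h1⟩
      · right; right; right; exact ⟨by simpa using h, h1⟩
    · right; left; left; exact h

lemma lexPos_smul {I : Type*} (l : List I) (r : I → ℝ) (e : ℝ) (he : 0 < e) (h : LexPos l r) :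
    LexPos l (e • r) := by
  induction l with
  | nil => exact h
  | cons a l ih =>
    rcases h with h | ⟨h, h1⟩
    · left; simpa using mul_pos he h
    · right; exact ⟨by simp [h], ih h1⟩

lemma lexPos_zero {I : Type*} (l : List I) : ¬ LexPos l (0 : I → ℝ) := by
  induction l with
  | nil => exact fun h => h
  | cons a l ih =>
    rintro (h | ⟨_, h⟩)
    · simp at h
    · exact ih h

lemma exists_lexMax {I : Type*} (l : List I) (C : Set (I → ℝ)) (hC : IsCompact C)
    (hne : C.Nonempty) : ∃ x ∈ C, ∀ y ∈ C, ¬ LexPos l (y - x) := by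
  induction l generalizing C with
  | nil => obtain ⟨x, hx⟩ := hne; exact ⟨x, hx, fun _ _ h => h⟩
  | cons a l ih =>
    obtain ⟨m, hm, hmax⟩ := hC.exists_isMaxOn hne (f := fun x => x a) (by fun_prop)
    have hcl : IsClosed {x : I → ℝ | x a = m a} := isClosed_eq (by fun_prop) (by fun_prop)
    obtain ⟨x, hx, hx2⟩ := ih (C ∩ {x | x a = m a}) (hC.inter_right hcl) ⟨m, hm, rfl⟩
    refine ⟨x, hx.1, fun y hy => ?_⟩
    have h1 : y a ≤ m a := hmax hy
    have h2 : x a = m a := hx.2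
    rintro (h | ⟨h, h3⟩)
    · simp only [Pi.sub_apply] at h; linarith
    · simp only [Pi.sub_apply] at h
      exact hx2 y ⟨hy, by show y a = m a; linarith⟩ h3

section
variable {I : Type*} [Fintype I] {n : ℕ}

/-- Faces of the pulling triangulation. -/
def Good (l : List I) (v : I → Fin n → ℝ) (S : Finset I) : Prop :=
  ∀ r : I → ℝ, ∑ i, r i = 0 → ∑ i, r i • v i = 0 → (∀ i ∉ S, 0 ≤ r i) → ¬ LexPos l r

lemma Good.mono {l : List I} {v : I → Fin n → ℝ} {S T : Finset I} (h : Good l v T)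
    (hST : S ⊆ T) : Good l v S :=
  fun r h1 h2 h3 => h r h1 h2 fun i hi => h3 i fun hS => hi (hST hS)

lemma Good.insert [DecidableEq I] {l : List I} {a : I} {v : I → Fin n → ℝ} {S : Finset I}
    (h : Good (a :: l) v S) : Good (a :: l) v (insert a S) := by
  intro r h1 h2 h3 h4
  refine h r h1 h2 (fun i hi => ?_) h4
  by_cases hia : i = a
  · subst hia
    rcases h4 with h4 | h4
    · exact h4.le
    · exact h4.1.ge
  · exact h3 i (by simp [hia, hi])

lemma good_empty (l : List I) (v : I → Fin n → ℝ) : Good l v ∅ := by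
  intro r h1 _ h3
  have : r = 0 := by
    funext i
    exact (Finset.sum_eq_zero_iff_of_nonneg (fun i _ => h3 i (by simp))).1 h1 i (by simp)
  rw [this]; exact lexPos_zero l

/-- support -/
noncomputable def supp (x : I → ℝ) : Finset I := by
  classical exact Finset.univ.filter (fun i => x i ≠ 0)

lemma mem_supp {x : I → ℝ} {i : I} : i ∈ supp x ↔ x i ≠ 0 := by simp [supp]

/-- canonical coordinates of lattice points at height `t`. -/
def Y (l : List I) (v : I → Fin n → ℝ) (t : ℕ) : Set (I → ℝ) :=
  {x | (∀ i, 0 ≤ x i) ∧ ∑ i, x i = t ∧ (∀ k, ∃ z : ℤ, (∑ i, x i • v i) k = z) ∧ Good l v (supp x)}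

lemma Y_injOn (l : List I) (hl : ∀ i, i ∈ l) (v : I → Fin n → ℝ) (t : ℕ) :
    Set.InjOn (fun x : I → ℝ => ∑ i, x i • v i) (Y l v t) := by
  have key : ∀ x ∈ Y l v t, ∀ y ∈ Y l v t, ∑ i, x i • v i = ∑ i, y i • v i →
      ¬ LexPos l (x - y) := by
    intro x hx y hy h
    refine hy.2.2.2 _ ?_ ?_ ?_
    · simp [hx.2.1, hy.2.1]
    · simp [sub_smul, h]
    · intro i hi
      have : y i = 0 := by by_contra h0; exact hi (mem_supp.2 h0)
      simpa [this] using hx.1 i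
  intro x hx y hy h
  rcases lexPos_tri l (x - y) with h1 | h1 | h1
  · funext i; have := h1 i (hl i); simp only [Pi.sub_apply] at this; linarith
  · exact absurd h1 (key x hx y hy h)
  · rw [neg_sub] at h1; exact absurd h1 (key y hy x hx h.symm)

lemma Y_image (l : List I) (v : I → Fin n → ℝ) (t : ℕ) :
    (fun x : I → ℝ => ∑ i, x i • v i) '' (Y l v t) =
      {p | (∃ x : I → ℝ, (∀ i, 0 ≤ x i) ∧ ∑ i, x i = t ∧ ∑ i, x i • v i = p) ∧
        ∀ k, ∃ z : ℤ, p k = z} := by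
  ext p
  constructor
  · rintro ⟨x, hx, rfl⟩
    exact ⟨⟨x, hx.1, hx.2.1, rfl⟩, hx.2.2.1⟩
  · rintro ⟨⟨x0, h0⟩, hp⟩
    let C : Set (I → ℝ) := {x | (∀ i, 0 ≤ x i) ∧ ∑ i, x i = t ∧ ∑ i, x i • v i = p}
    have hCc : IsCompact C := by
      have hcl : IsClosed C := by
        have e : C = (⋂ i, {x : I → ℝ | 0 ≤ x i}) ∩ ({x | ∑ i, x i = t} ∩
            {x | ∑ i, x i • v i = p}) := by
          ext x; simp [C]
        rw [e]
        refine (isClosed_iInter fun i => isClosed_le (by fun_prop) (by fun_prop)).inter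
          ((isClosed_eq (by fun_prop) (by fun_prop)).inter
            (isClosed_eq (by fun_prop) (by fun_prop)))
      refine (isCompact_Icc (a := (0 : I → ℝ)) (b := fun _ => (t : ℝ))).of_isClosed_subset hcl ?_
      intro x hx
      refine ⟨fun i => hx.1 i, fun i => ?_⟩
      rw [← hx.2.1]
      exact Finset.single_le_sum (fun i _ => hx.1 i) (Finset.mem_univ i)
    obtain ⟨x, hx, hmax⟩ := exists_lexMax l C hCc ⟨x0, h0⟩
    refine ⟨x, ⟨hx.1, hx.2.1, ?_, ?_⟩, hx.2.2⟩
    · rw [hx.2.2]; exact hp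
    · intro r h1 h2 h3 h4
      -- find epsilon
      have hev : ∀ i, ∀ᶠ e : ℝ in nhdsWithin 0 (Set.Ioi 0), 0 ≤ x i + e * r i := by
        intro i
        by_cases hi : i ∈ supp x
        · have hpos : 0 < x i := lt_of_le_of_ne (hx.1 i) (Ne.symm (mem_supp.1 hi))
          have : Filter.Tendsto (fun e : ℝ => x i + e * r i) (nhdsWithin 0 (Set.Ioi 0))
              (nhds (x i + 0 * r i)) :=
            (Continuous.tendsto (by fun_prop) 0).mono_left nhdsWithin_le_nhds
          rw [zero_mul, add_zero] at this
          filter_upwards [this.eventually (lt_mem_nhds hpos)] with e he using he.le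
        · filter_upwards [self_mem_nhdsWithin] with e he
          exact add_nonneg (hx.1 i) (mul_nonneg (le_of_lt he) (h3 i hi))
      obtain ⟨e, he, hpos⟩ := ((Filter.eventually_all.2 hev).and self_mem_nhdsWithin).exists
      refine hmax (x + e • r) ⟨fun i => by simpa using he i, ?_, ?_⟩ ?_
      · simp [Finset.sum_add_distrib, ← Finset.mul_sum, h1, hx.2.1]
      · simp [add_smul, Finset.sum_add_distrib, mul_smul, ← Finset.smul_sum, h2, hx.2.2]
      · rw [add_sub_cancel_left]; exact lexPos_smul l r e hpos h4

lemma Y_finite (l : List I) (hl : ∀ i, i ∈ l) (v : I → Fin n → ℝ) (t : ℕ) :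
    (Y l v t).Finite := by
  refine Set.Finite.of_finite_image ?_ (Y_injOn l hl v t)
  obtain ⟨B, hB⟩ : ∃ B : ℝ, ∀ i k, |v i k| ≤ B := by
    refine ⟨∑ i, ∑ k, |v i k|, fun i k => ?_⟩
    refine (Finset.single_le_sum (f := fun k => |v i k|) (fun _ _ => abs_nonneg _)
      (Finset.mem_univ k)).trans ?_
    exact Finset.single_le_sum (f := fun i => ∑ k, |v i k|)
      (fun _ _ => Finset.sum_nonneg fun _ _ => abs_nonneg _) (Finset.mem_univ i)
  have hfin : (Set.Icc (fun _ : Fin n => -⌈(t : ℝ) * B⌉) (fun _ => ⌈(t : ℝ) * B⌉)).Finite :=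
    Set.finite_Icc _ _
  refine (hfin.image (fun (z : Fin n → ℤ) k => (z k : ℝ))).subset ?_
  rintro _ ⟨x, hx, rfl⟩
  choose z hz using hx.2.2.1
  have hb : ∀ k, |(z k : ℝ)| ≤ ⌈(t : ℝ) * B⌉ := by
    intro k
    refine le_trans ?_ (Int.le_ceil _)
    rw [← hz k, Finset.sum_apply, ← hx.2.1, Finset.sum_mul]
    refine (Finset.abs_sum_le_sum_abs _ _).trans (Finset.sum_le_sum fun i _ => ?_)
    rw [Pi.smul_apply, smul_eq_mul, abs_mul, abs_of_nonneg (hx.1 i)]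
    exact mul_le_mul_of_nonneg_left (hB i k) (hx.1 i)
  refine ⟨z, ⟨fun k => ?_, fun k => ?_⟩, ?_⟩
  · have := (abs_le.1 (hb k)).1; exact_mod_cast this
  · have := (abs_le.1 (hb k)).2; exact_mod_cast this
  · funext k; exact (hz k).symm

lemma Y_zero (l : List I) (v : I → Fin n → ℝ) : (Y l v 0).ncard = 1 := by
  rw [Set.ncard_eq_one]
  refine ⟨0, ?_⟩
  ext x
  constructor
  · intro hx
    have h := hx.2.1
    rw [Nat.cast_zero, Finset.sum_eq_zero_iff_of_nonneg (fun i _ => hx.1 i)] at h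
    funext i; exact h i (Finset.mem_univ i)
  · rintro rfl
    refine ⟨fun _ => le_rfl, by simp, fun k => ⟨0, by simp⟩, ?_⟩
    have : supp (0 : I → ℝ) = ∅ := by ext i; simp [mem_supp]
    rw [this]; exact good_empty l v

lemma choose_poly (c k : ℕ) : ∃ p : Polynomial ℚ, ∀ t : ℕ,
    p.eval (t : ℚ) = ((t + c).choose k : ℕ) := by
  refine ⟨((descPochhammer ℚ k).comp (Polynomial.X + Polynomial.C (c : ℚ))) *
    Polynomial.C ((k.factorial : ℚ)⁻¹), fun t => ?_⟩
  rw [Nat.cast_choose_eq_descPochhammer_div]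
  simp [div_eq_mul_inv]

lemma piAntidiag_poly [DecidableEq I] (B : Finset I) (j : ℕ) (hj : j < B.card) :
    ∃ p : Polynomial ℚ, ∀ t : ℕ, p.eval (t : ℚ) =
      (if j ≤ t then (Finset.piAntidiag B (t - j)).card else 0 : ℕ) := by
  obtain ⟨p, hp⟩ := choose_poly (B.card - 1 - j) (B.card - 1)
  refine ⟨p, fun t => ?_⟩
  rw [hp t]
  congr 1
  split_ifs with h
  · have : (Finset.piAntidiag B (t - j)).card = (Finset.finsuppAntidiag B (t - j)).card := by
      simp [Finset.finsuppAntidiag]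
    rw [this, Finset.card_finsuppAntidiag_nat_eq_choose]
    rw [← Nat.choose_symm (by omega)]
    congr 1 <;> omega
  · apply Nat.choose_eq_zero_of_lt; omega

/-- fractional part -/
noncomputable def fr (x : I → ℝ) : I → ℝ := fun i => Int.fract (x i)

/-- the coordinates other than `a` that are nonzero integers -/
noncomputable def intSupp (a : I) (x : I → ℝ) : Finset I := by
  classical exact Finset.univ.filter (fun i => i ≠ a ∧ Int.fract (x i) = 0 ∧ x i ≠ 0)

lemma mem_intSupp {a : I} {x : I → ℝ} {i : I} :
    i ∈ intSupp a x ↔ i ≠ a ∧ Int.fract (x i) = 0 ∧ x i ≠ 0 := by simp [intSupp]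

lemma int_comb (v : I → Fin n → ℝ) (hv : ∀ i k, ∃ z : ℤ, v i k = z) (m : I → ℤ) (k : Fin n) :
    ∃ z : ℤ, (∑ i, (m i : ℝ) • v i) k = z := by
  choose w hw using hv
  exact ⟨∑ i, m i * w i k, by simp [Finset.sum_apply, hw]⟩

lemma fr_mem (l : List I) (v : I → Fin n → ℝ) (hv : ∀ i k, ∃ z : ℤ, v i k = z) (t : ℕ)
    (x : I → ℝ) (hx : x ∈ Y l v t) : ∃ q : ℕ, q ≤ Fintype.card I ∧ fr x ∈ Y l v q := by
  have hsum : ∑ i, fr x i = ((t - ∑ i, ⌊x i⌋ : ℤ) : ℝ) := by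
    have h : ∀ i, fr x i = x i - (⌊x i⌋ : ℝ) := fun i => rfl
    simp only [h, Finset.sum_sub_distrib, hx.2.1]
    push_cast; rfl
  have hnn : ∀ i, 0 ≤ fr x i := fun i => Int.fract_nonneg _
  have h0 : (0 : ℤ) ≤ t - ∑ i, ⌊x i⌋ := by
    have : (0 : ℝ) ≤ ∑ i, fr x i := Finset.sum_nonneg fun i _ => hnn i
    rw [hsum] at this; exact_mod_cast this
  obtain ⟨q, hq⟩ := Int.eq_ofNat_of_zero_le h0
  rw [hq] at hsum
  refine ⟨q, ?_, hnn, by simpa using hsum, ?_, ?_⟩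
  · have : ∑ i, fr x i ≤ ∑ i : I, (1 : ℝ) :=
      Finset.sum_le_sum fun i _ => (Int.fract_lt_one _).le
    rw [hsum] at this
    simp only [Finset.sum_const, Finset.card_univ, nsmul_eq_mul, mul_one] at this
    exact_mod_cast this
  · intro k
    obtain ⟨z1, h1⟩ := hx.2.2.1 k
    obtain ⟨z2, h2⟩ := int_comb v hv (fun i => ⌊x i⌋) k
    refine ⟨z1 - z2, ?_⟩
    rw [Int.cast_sub, ← h1, ← h2, ← Pi.sub_apply, ← Finset.sum_sub_distrib]
    simp only [← sub_smul]
    rfl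
  · refine hx.2.2.2.mono fun i hi => ?_
    rw [mem_supp] at hi ⊢
    intro h; apply hi; simp [fr, h]

lemma fiber_poly (a : I) (l : List I) (v : I → Fin n → ℝ)
    (hv : ∀ i k, ∃ z : ℤ, v i k = z) (f : I → ℝ) (S : Finset I) :
    ∃ p : Polynomial ℚ, ∀ t : ℕ, p.eval (t : ℚ) =
      ({x ∈ Y (a :: l) v t | fr x = f ∧ intSupp a x = S}.ncard : ℕ) := by
  classical
  by_cases H : ∃ t0, ∃ x0 ∈ Y (a :: l) v t0, fr x0 = f ∧ intSupp a x0 = S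
  swap
  · refine ⟨0, fun t => ?_⟩
    have : {x ∈ Y (a :: l) v t | fr x = f ∧ intSupp a x = S} = ∅ := by
      ext x
      simp only [Set.mem_ofPred_eq, Set.mem_empty_iff_false, iff_false]
      rintro ⟨hx, h⟩
      exact H ⟨t, x, hx, h⟩
    rw [this]; simp
  obtain ⟨t0, x0, hx0, hf, hS⟩ := H
  obtain ⟨q, -, hq⟩ := fr_mem _ v hv t0 x0 hx0
  rw [hf] at hq
  have hf0 : ∀ i, 0 ≤ f i := hq.1
  have hf1 : ∀ i, f i < 1 := fun i => by rw [← hf]; exact Int.fract_lt_one _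
  have hSf : ∀ i ∈ S, f i = 0 ∧ i ≠ a := by
    intro i hi
    rw [← hS, mem_intSupp] at hi
    rw [← hf]; exact ⟨hi.2.1, hi.1⟩
  set A := insert a (supp f) with hA
  have hdisj : Disjoint A S := by
    rw [Finset.disjoint_right]
    intro i hi hiA
    obtain ⟨h1, h2⟩ := hSf i hi
    rw [hA, Finset.mem_insert, mem_supp] at hiA
    tauto
  have hgood : Good (a :: l) v (A ∪ S) := by
    rw [hA, Finset.insert_union]
    refine (hx0.2.2.2.mono fun i hi => ?_).insert
    rw [Finset.mem_union, mem_supp] at hi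
    rw [mem_supp]
    rcases hi with hi | hi
    · intro h; apply hi; rw [← hf]; simp [fr, h]
    · rw [← hS, mem_intSupp] at hi; exact hi.2.2
  have hqA : q < A.card := by
    have h1 : ∑ i ∈ A, f i = q := by
      rw [← hq.2.1]
      refine Finset.sum_subset (Finset.subset_univ _) fun i _ hi => ?_
      by_contra h
      exact hi (Finset.mem_insert_of_mem (mem_supp.2 h))
    have h2 : ∑ i ∈ A, f i < ∑ i ∈ A, (1 : ℝ) :=
      Finset.sum_lt_sum_of_nonempty ⟨a, Finset.mem_insert_self _ _⟩ fun i _ => hf1 i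
    rw [h1] at h2
    simp only [Finset.sum_const, nsmul_eq_mul, mul_one] at h2
    exact_mod_cast h2
  have hcard : (A ∪ S).card = A.card + S.card := Finset.card_union_of_disjoint hdisj
  obtain ⟨p, hp⟩ := piAntidiag_poly (A ∪ S) (q + S.card) (by omega)
  refine ⟨p, fun t => ?_⟩
  rw [hp t]
  congr 1
  let ind : I → ℕ := fun i => if i ∈ S then 1 else 0
  have hind : ∑ i, ind i = S.card := by simp [ind]
  -- parametrization of the fibre
  have hpar : ∀ x ∈ Y (a :: l) v t, fr x = f → intSupp a x = S →
      ∃ m : I → ℕ, (∀ i, x i = f i + ((ind i + m i : ℕ) : ℝ)) ∧ (∀ i, m i ≠ 0 → i ∈ A ∪ S) ∧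
        q + S.card + ∑ i, m i = t := by
    intro x hx hxf hxS
    have hex : ∀ i, ∃ m : ℕ, x i = f i + ((ind i + m : ℕ) : ℝ) := by
      intro i
      have hfl : 0 ≤ ⌊x i⌋ := Int.floor_nonneg.2 (hx.1 i)
      obtain ⟨N, hN⟩ := Int.eq_ofNat_of_zero_le hfl
      have hxi : x i = f i + (N : ℝ) := by
        have h1 := Int.fract_add_floor (x i)
        rw [hN] at h1
        rw [← hxf, ← h1]; simp [fr]
      by_cases hi : i ∈ S
      · have hi' := hi
        rw [← hxS, mem_intSupp] at hi'
        have hN0 : N ≠ 0 := by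
          rintro rfl
          apply hi'.2.2; rw [hxi, (hSf i hi).1]; simp
        refine ⟨N - 1, ?_⟩
        have : ind i + (N - 1) = N := by simp only [ind, hi, if_true]; omega
        rw [this]; exact hxi
      · refine ⟨N, ?_⟩
        have : ind i + N = N := by simp [ind, hi]
        rw [this]; exact hxi
    choose m hm using hex
    refine ⟨m, hm, fun i hi => ?_, ?_⟩
    · by_contra hn
      rw [Finset.mem_union, not_or, hA, Finset.mem_insert, not_or, mem_supp, not_not] at hn
      have : i ∈ intSupp a x := by
        rw [mem_intSupp]
        refine ⟨hn.1.1, ?_, ?_⟩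
        · have := congrFun hxf i; rw [hn.1.2] at this; exact this
        · rw [hm i, hn.1.2, zero_add]
          have : ind i + m i ≠ 0 := by omega
          exact_mod_cast this
      rw [hxS] at this
      exact hn.2 this
    · have h1 := hx.2.1
      simp only [hm, Finset.sum_add_distrib, hq.2.1, ← Nat.cast_sum] at h1
      rw [hind] at h1
      have h2 : q + (S.card + ∑ i, m i) = t := by exact_mod_cast h1
      omega
  split_ifs with hjt
  · have hset : {x ∈ Y (a :: l) v t | fr x = f ∧ intSupp a x = S} =
        (fun (m : I → ℕ) i => f i + ((ind i + m i : ℕ) : ℝ)) ''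
          (Finset.piAntidiag (A ∪ S) (t - (q + S.card)) : Set (I → ℕ)) := by
      ext x
      constructor
      · rintro ⟨hx, hxf, hxS⟩
        obtain ⟨m, h1, h2, h3⟩ := hpar x hx hxf hxS
        refine ⟨m, ?_, funext fun i => (h1 i).symm⟩
        rw [Finset.mem_coe, Finset.mem_piAntidiag]
        refine ⟨?_, h2⟩
        rw [Finset.sum_subset (Finset.subset_univ _) fun i _ hi => ?_]
        · omega
        · by_contra h; exact hi (h2 i h)
      · rintro ⟨m, hm, rfl⟩
        rw [Finset.mem_coe, Finset.mem_piAntidiag] at hm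
        obtain ⟨hm1, hm2⟩ := hm
        have hm3 : ∑ i, m i = t - (q + S.card) := by
          rw [← hm1]; symm
          refine Finset.sum_subset (Finset.subset_univ _) fun i _ hi => ?_
          by_contra h; exact hi (hm2 i h)
        have hfr : ∀ i, Int.fract (f i + ((ind i + m i : ℕ) : ℝ)) = f i := by
          intro i
          rw [Int.fract_add_natCast, Int.fract_eq_self]
          exact ⟨hf0 i, hf1 i⟩
        refine ⟨⟨fun i => ?_, ?_, fun k => ?_, ?_⟩, funext hfr, ?_⟩
        · have := hf0 i; positivity
        · simp only [Finset.sum_add_distrib, hq.2.1, ← Nat.cast_sum]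
          rw [hind, hm3, ← Nat.cast_add]
          congr 1; omega
        · obtain ⟨z1, h1⟩ := hq.2.2.1 k
          obtain ⟨z2, h2⟩ := int_comb v hv (fun i => ((ind i + m i : ℕ) : ℤ)) k
          refine ⟨z1 + z2, ?_⟩
          rw [Int.cast_add, ← h1, ← h2, ← Pi.add_apply, ← Finset.sum_add_distrib]
          simp only [← add_smul, Int.cast_natCast]
        · refine hgood.mono fun i hi => ?_
          rw [mem_supp] at hi
          by_contra hn
          have hm0 : m i = 0 := by by_contra h; exact hn (hm2 i h)
          rw [Finset.mem_union, not_or, hA, Finset.mem_insert, not_or, mem_supp, not_not] at hn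
          apply hi
          simp [hn.1.2, hm0, ind, hn.2]
        · ext i
          rw [mem_intSupp, hfr i]
          constructor
          · rintro ⟨h1, h2, h3⟩
            by_contra hn
            beta_reduce at h3
            rw [h2, zero_add] at h3
            have hm0 : m i ≠ 0 := by
              intro h; apply h3; simp [ind, hn, h]
            have := hm2 i hm0
            rw [Finset.mem_union, hA, Finset.mem_insert, mem_supp] at this
            tauto
          · intro hi
            refine ⟨(hSf i hi).2, (hSf i hi).1, ?_⟩
            beta_reduce
            rw [(hSf i hi).1, zero_add]
            have : ind i + m i ≠ 0 := by simp [ind, hi]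
            exact_mod_cast this
    rw [hset, Set.ncard_image_of_injective, Set.ncard_coe_finset]
    intro m m' h
    funext i
    have := congrFun h i
    simp only [add_right_inj, Nat.cast_inj] at this
    exact this
  · symm
    have : {x ∈ Y (a :: l) v t | fr x = f ∧ intSupp a x = S} = ∅ := by
      ext x
      simp only [Set.mem_ofPred_eq, Set.mem_empty_iff_false, iff_false]
      rintro ⟨hx, hxf, hxS⟩
      obtain ⟨m, h1, h2, h3⟩ := hpar x hx hxf hxS
      omega
    rw [this]; simp

lemma Y_poly (a : I) (l : List I) (hl : ∀ i, i ∈ a :: l) (v : I → Fin n → ℝ)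
    (hv : ∀ i k, ∃ z : ℤ, v i k = z) :
    ∃ p : Polynomial ℚ, ∀ t : ℕ, p.eval (t : ℚ) = ((Y (a :: l) v t).ncard : ℕ) := by
  classical
  choose P hP using fiber_poly a l v hv
  have hfin : (⋃ q ∈ Finset.range (Fintype.card I + 1), Y (a :: l) v q).Finite :=
    Set.Finite.biUnion (Finset.finite_toSet _) fun q _ => Y_finite _ hl v q
  let T : Finset ((I → ℝ) × Finset I) := hfin.toFinset ×ˢ Finset.univ
  refine ⟨∑ c ∈ T, P c.1 c.2, fun t => ?_⟩
  rw [Polynomial.eval_finsetSum]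
  simp only [hP]
  rw [← Nat.cast_sum]
  congr 1
  have hY := Y_finite _ hl v t
  rw [Set.ncard_eq_toFinset_card _ hY, Finset.card_eq_sum_card_fiberwise
    (f := fun x => (fr x, intSupp a x)) (t := T)]
  · refine Finset.sum_congr rfl fun c _ => ?_
    rw [← Set.ncard_coe_finset]
    congr 1
    ext x
    simp [Prod.ext_iff]
  · intro x hx
    have hx' : x ∈ Y (a :: l) v t := by simpa using hx
    obtain ⟨q, h1, h2⟩ := fr_mem _ v hv t x hx'
    simp only [T, Finset.coe_product, Set.mem_prod, Finset.mem_coe, Finset.mem_univ, and_true,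
      Set.Finite.mem_toFinset, Set.mem_iUnion, Finset.mem_range]
    exact ⟨q, by omega, h2⟩
end

theorem stmt13 (n d : ℕ) (V : Finset (Fin n → ℤ)) (hV : V.Nonempty)
    (P : Set (Fin n → ℝ))
    (hP : P = convexHull ℝ ((fun (v : Fin n → ℤ) (i : Fin n) => (v i : ℝ)) '' V))
    (hd : Module.finrank ℝ (affineSpan ℝ P).direction = d)
    (L : Polynomial ℚ)
    (hL : ∀ t : ℕ, 0 < t → L.eval (t : ℚ) = latticeCount ((t : ℝ) • P)) :
    L.eval 0 = 1 := by
  classical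
  set W : Finset (Fin n → ℝ) := V.image (fun (v : Fin n → ℤ) (i : Fin n) => (v i : ℝ)) with hW
  have hPW : P = convexHull ℝ (W : Set (Fin n → ℝ)) := by rw [hP, hW, Finset.coe_image]
  have hWne : W.Nonempty := hV.image _
  let v : W → Fin n → ℝ := Subtype.val
  have hv : ∀ i k, ∃ z : ℤ, v i k = z := by
    rintro ⟨w, hw⟩ k
    rw [hW, Finset.mem_image] at hw
    obtain ⟨u, _, rfl⟩ := hw
    exact ⟨u k, rfl⟩
  obtain ⟨w0, hw0⟩ := hWne
  let a : W := ⟨w0, hw0⟩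
  let l : List W := Finset.univ.toList
  have hl : ∀ i, i ∈ a :: l := fun i => by simp [l]
  obtain ⟨p, hp⟩ := Y_poly a l hl v hv
  have hcount : ∀ t : ℕ, 0 < t → latticeCount ((t : ℝ) • P) = (Y (a :: l) v t).ncard := by
    intro t ht
    have ht' : (t : ℝ) ≠ 0 := by positivity
    rw [← Set.ncard_image_of_injOn (Y_injOn _ hl v t), Y_image, latticeCount]
    congr 1
    ext y
    simp only [Set.mem_ofPred_eq]
    refine and_congr_left fun _ => ?_
    rw [Set.mem_smul_set, hPW]
    constructor
    · rintro ⟨z, hz, rfl⟩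
      obtain ⟨w, h1, h2, h3⟩ := Finset.mem_convexHull'.1 hz
      refine ⟨fun i => t * w i, fun i => mul_nonneg (by positivity) (h1 _ i.2), ?_, ?_⟩
      · rw [← Finset.mul_sum, Finset.sum_coe_sort W w, h2, mul_one]
      · simp only [mul_smul, ← Finset.smul_sum]
        rw [← h3, ← Finset.sum_coe_sort W]
    · rintro ⟨x, h1, h2, rfl⟩
      refine ⟨(t : ℝ)⁻¹ • ∑ i, x i • v i, ?_, by rw [smul_inv_smul₀ ht']⟩
      refine mem_convexHull_of_exists_fintype (fun i => (t : ℝ)⁻¹ * x i) v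
        (fun i => mul_nonneg (by positivity) (h1 i)) ?_ (fun i => i.2) ?_
      · rw [← Finset.mul_sum, h2, inv_mul_cancel₀ ht']
      · simp only [mul_smul, ← Finset.smul_sum]
  have hLp : L = p := by
    apply Polynomial.eq_of_infinite_eval_eq
    refine Set.Infinite.mono ?_ (Set.infinite_range_of_injective
      (f := fun t : ℕ => ((t + 1 : ℕ) : ℚ)) fun s t h => by simpa using h)
    rintro _ ⟨t, rfl⟩
    show L.eval _ = p.eval _
    rw [hL _ t.succ_pos, hp, hcount _ t.succ_pos]
  have := hp 0
  rw [Y_zero] at this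
  rw [hLp]; simpa using this
end

section
/- Let P ⊂ ℝⁿ be a rational polytope of dimension d with denominator s (the least positive integer with s·P integral). Then the function t ↦ #(t·P ∩ ℤⁿ) for t ∈ ℤ_{>0} is a quasi-polynomial of degree d whose period divides s: for each residue 0 ≤ j < s there is a polynomial p_j of degree ≤ d with #(t·P ∩ ℤⁿ) = p_j(t) whenever t ≡ j (mod s), t > 0, and at least one p_j has degree exactly d. -/
open Pointwise

/-- A subset of `ℝⁿ` is an integral polytope if it is the convex hull of
finitely many integer points. -/
def IsIntegralPolytope {n : ℕ} (S : Set (Fin n → ℝ)) : Prop :=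
  ∃ W : Finset (Fin n → ℤ),
    S = convexHull ℝ ((fun (w : Fin n → ℤ) (i : Fin n) => (w i : ℝ)) '' W)


namespace Ehrhart

open Polynomial

section lex
variable {ι : Type*}

/-- First nonzero entry (along the list) is negative. -/
def lexneg : List ι → (ι → ℝ) → Prop
  | [], _ => False
  | i :: l, μ => μ i < 0 ∨ (μ i = 0 ∧ lexneg l μ)

lemma lexneg_smul (l : List ι) (μ : ι → ℝ) (ε : ℝ) (hε : 0 < ε) (h : lexneg l μ) :
    lexneg l (ε • μ) := by
  induction l with
  | nil => exact h
  | cons i l ih =>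
    rcases h with h | ⟨h, h'⟩
    · left
      simpa using mul_neg_of_pos_of_neg hε h
    · right
      exact ⟨by simp [h], ih h'⟩

lemma lexneg_total (l : List ι) (μ : ι → ℝ) (h : ∃ i ∈ l, μ i ≠ 0) :
    lexneg l μ ∨ lexneg l (-μ) := by
  induction l with
  | nil => simp at h
  | cons i l ih =>
    rcases lt_trichotomy (μ i) 0 with h0 | h0 | h0
    · left; left; exact h0
    · have : ∃ j ∈ l, μ j ≠ 0 := by
        obtain ⟨j, hj, hj'⟩ := h
        rcases List.mem_cons.1 hj with rfl | hj
        · exact absurd h0 hj'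
        · exact ⟨j, hj, hj'⟩
      rcases ih this with h1 | h1
      · left; right; exact ⟨h0, h1⟩
      · right; right; exact ⟨by simp [h0], h1⟩
    · right; left; simpa using h0

lemma exists_lexmin (l : List ι) (K : Set (ι → ℝ)) (hK : IsCompact K) (hne : K.Nonempty) :
    ∃ c ∈ K, ∀ c' ∈ K, ¬ lexneg l (c' - c) := by
  induction l generalizing K with
  | nil =>
    obtain ⟨c, hc⟩ := hne
    exact ⟨c, hc, fun _ _ h => h⟩
  | cons i l ih =>
    obtain ⟨x, hx, hmin⟩ := hK.exists_isMinOn hne (f := fun c => c i)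
      (continuous_apply i).continuousOn
    have hcl : IsClosed {c : ι → ℝ | c i = x i} :=
      isClosed_eq (continuous_apply i) continuous_const
    obtain ⟨c, hc, hc'⟩ := ih (K ∩ {c | c i = x i}) (hK.inter_right hcl) ⟨x, hx, rfl⟩
    refine ⟨c, hc.1, fun c' hc'K h => ?_⟩
    have h1 : x i ≤ c' i := hmin hc'K
    have h2 : c i = x i := hc.2
    rcases h with h | ⟨h, h'⟩
    · simp only [Pi.sub_apply] at h
      linarith
    · simp only [Pi.sub_apply] at h
      exact hc' c' ⟨hc'K, by simp only [Set.mem_ofPred_eq]; linarith⟩ h'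

end lex

section main
variable {ι : Type*} [Fintype ι] {n : ℕ}

/-- The homogenized linear map. -/
noncomputable def Lm (w : ι → Fin n → ℤ) : (ι → ℝ) →ₗ[ℝ] ((Fin n → ℝ) × ℝ) :=
  ∑ i, (LinearMap.proj i).smulRight ((fun k => (w i k : ℝ)), (1 : ℝ))

lemma Lm_fst (w : ι → Fin n → ℤ) (c : ι → ℝ) (k : Fin n) :
    (Lm w c).1 k = ∑ i, c i * w i k := by
  simp [Lm, LinearMap.sum_apply, Prod.fst_sum, Finset.sum_apply]

lemma Lm_snd (w : ι → Fin n → ℤ) (c : ι → ℝ) :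
    (Lm w c).2 = ∑ i, c i := by
  simp [Lm, LinearMap.sum_apply, Prod.snd_sum]

/-- A support is good if it is lexicographically minimal. -/
def good (w : ι → Fin n → ℤ) (c : ι → ℝ) : Prop :=
  ∀ μ : ι → ℝ, Lm w μ = 0 → (∀ i, c i = 0 → 0 ≤ μ i) → ¬ lexneg Finset.univ.toList μ

lemma good_congr (w : ι → Fin n → ℤ) (c c' : ι → ℝ) (h : ∀ i, c i = 0 ↔ c' i = 0) :
    good w c ↔ good w c' := by
  simp only [good, h]

lemma exists_good (w : ι → Fin n → ℤ) (c : ι → ℝ) (hc : ∀ i, 0 ≤ c i) :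
    ∃ c' : ι → ℝ, (∀ i, 0 ≤ c' i) ∧ Lm w c' = Lm w c ∧ good w c' := by
  classical
  let K : Set (ι → ℝ) := {x | (∀ i, 0 ≤ x i) ∧ Lm w x = Lm w c}
  have hK : IsCompact K := by
    have hb : K ⊆ Set.Icc 0 (fun _ => ∑ i, c i) := by
      intro x hx
      refine ⟨fun i => hx.1 i, fun i => ?_⟩
      have : ∑ i, x i = ∑ i, c i := by rw [← Lm_snd w, ← Lm_snd w, hx.2]
      rw [← this]
      exact Finset.single_le_sum (f := x) (fun i _ => hx.1 i) (Finset.mem_univ i)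
    refine isCompact_Icc.of_isClosed_subset ?_ hb
    apply IsClosed.inter
    · exact isClosed_Ici (a := (0 : ι → ℝ))
    · exact isClosed_eq (LinearMap.continuous_of_finiteDimensional _) continuous_const
  obtain ⟨x, hx, hmin⟩ := exists_lexmin Finset.univ.toList K hK ⟨c, hc, rfl⟩
  refine ⟨x, hx.1, hx.2, fun μ hμ hμ0 hneg => ?_⟩
  obtain ⟨ε, hε, hε'⟩ : ∃ ε : ℝ, 0 < ε ∧ ∀ i, 0 ≤ x i + ε * μ i := by
    have : ∀ i, ∃ ε : ℝ, 0 < ε ∧ ∀ δ, 0 < δ → δ ≤ ε → 0 ≤ x i + δ * μ i := by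
      intro i
      rcases (hx.1 i).eq_or_lt with h | h
      · refine ⟨1, one_pos, fun δ hδ _ => ?_⟩
        have := mul_nonneg hδ.le (hμ0 i h.symm)
        rw [← h]; simpa using this
      · refine ⟨x i / (|μ i| + 1), by positivity, fun δ hδ hδ' => ?_⟩
        rw [le_div_iff₀ (by positivity)] at hδ'
        have := neg_abs_le (μ i)
        nlinarith
    choose e he he' using this
    rcases isEmpty_or_nonempty ι with hι | hι
    · exact ⟨1, one_pos, fun i => isEmptyElim i⟩
    · obtain ⟨i0, hi0⟩ := Finite.exists_min e
      exact ⟨e i0, he i0, fun i => he' i _ (he i0) (hi0 i)⟩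
  refine hmin (x + ε • μ) ⟨fun i => by simpa using hε' i, by simp [hμ, hx.2]⟩ ?_
  simpa using lexneg_smul _ _ _ hε hneg

lemma eq_of_good (w : ι → Fin n → ℤ) (c c' : ι → ℝ) (hc : ∀ i, 0 ≤ c i) (hc' : ∀ i, 0 ≤ c' i)
    (hg : good w c) (hg' : good w c') (h : Lm w c = Lm w c') : c = c' := by
  by_contra hne
  have : ∃ i ∈ (Finset.univ : Finset ι).toList, (c' - c) i ≠ 0 := by
    by_contra! h0
    apply hne
    ext i
    have := h0 i (by simp)
    simp only [Pi.sub_apply] at this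
    linarith
  rcases lexneg_total _ _ this with h1 | h1
  · exact hg _ (by simp [h]) (fun i hi => by simpa [hi] using hc' i) h1
  · rw [neg_sub] at h1
    exact hg' _ (by simp [h]) (fun i hi => by simpa [hi] using hc i) h1

lemma zero_of_good (w : ι → Fin n → ℤ) (c μ : ι → ℝ) (hg : good w c) (hμ : Lm w μ = 0)
    (h0 : ∀ i, c i = 0 → μ i = 0) : μ = 0 := by
  by_contra hne
  have : ∃ i ∈ (Finset.univ : Finset ι).toList, μ i ≠ 0 := by
    by_contra! h0
    apply hne
    ext i
    exact h0 i (by simp)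
  rcases lexneg_total _ _ this with h1 | h1
  · exact hg _ hμ (fun i hi => (h0 i hi).ge) h1
  · exact hg _ (by simp [hμ]) (fun i hi => by simp [h0 i hi]) h1

/-- Real version of an integer vector. -/
def re (v : Fin n → ℤ) : Fin n → ℝ := fun k => (v k : ℝ)

lemma card_good [DecidableEq ι] (w : ι → Fin n → ℤ) (s : ℕ) (hs : 0 < s) (c : ι → ℝ)
    (hg : good w c) :
    (Finset.univ.filter (fun i => c i ≠ 0)).card ≤
      Module.finrank ℝ (vectorSpan ℝ (Set.range fun i => (s : ℝ)⁻¹ • re (w i))) + 1 := by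
  have hs' : (s : ℝ) ≠ 0 := by positivity
  let p : {i // c i ≠ 0} → Fin n → ℝ := fun i => (s : ℝ)⁻¹ • re (w i)
  have hp : AffineIndependent ℝ p := by
    rw [affineIndependent_iff]
    intro T a ha1 ha2 e he
    let μ : ι → ℝ := fun i => if h : c i ≠ 0 then (if (⟨i, h⟩ : {i // c i ≠ 0}) ∈ T then
      a ⟨i, h⟩ else 0) else 0
    have key : ∀ g : ι → ℝ, ∑ i, μ i * g i = ∑ e ∈ T, a e * g e := by
      intro g
      have h1 : ∑ i, μ i * g i = ∑ i ∈ T.map (Function.Embedding.subtype _), μ i * g i := by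
        symm
        apply Finset.sum_subset (Finset.subset_univ _)
        intro i _ hi
        simp only [Finset.mem_map, not_exists, not_and] at hi
        simp only [μ]
        split_ifs with h1 h2
        · exact absurd rfl (hi _ h2)
        · simp
        · simp
      rw [h1, Finset.sum_map]
      apply Finset.sum_congr rfl
      intro x hx
      have : μ x.1 = a x := by
        simp [μ, x.2, hx]
      simp [this]
    have hμ : Lm w μ = 0 := by
      ext k
      · rw [Lm_fst, key]
        have := congrFun ha2 k
        simp only [p, Finset.sum_apply, Pi.smul_apply, smul_eq_mul, re, Pi.zero_apply] at this
        have h2 : ∑ e ∈ T, a e * ((s : ℝ)⁻¹ * (w e k : ℝ)) =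
            (s : ℝ)⁻¹ * ∑ e ∈ T, a e * (w e k : ℝ) := by
          rw [Finset.mul_sum]; apply Finset.sum_congr rfl; intros; ring
        rw [h2] at this
        simpa [hs'] using this
      · rw [Lm_snd]
        have := key 1
        simp only [Pi.one_apply, mul_one] at this
        rw [this, ha1]; rfl
    have h0 := congrFun (zero_of_good w c μ hg hμ (fun i hi => by simp [μ, hi])) e.1
    simpa [μ, e.2, he] using h0
  have h1 := hp.card_le_finrank_succ
  rw [Fintype.card_subtype] at h1
  refine h1.trans (Nat.add_le_add_right (Submodule.finrank_mono (vectorSpan_mono ℝ ?_)) 1)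
  rintro _ ⟨i, rfl⟩
  exact ⟨i.1, rfl⟩

end main

section counting
variable {ι : Type*} [Fintype ι] [DecidableEq ι]

lemma card_piAntidiag_nat (S : Finset ι) (q r : ℕ) (hr : S.card = r + 1) :
    (S.piAntidiag q).card = (q + r).choose r := by
  have h1 : (S.finsuppAntidiag q).card = (S.piAntidiag q).card := by
    simp [Finset.finsuppAntidiag]
  rw [← h1, Finset.card_finsuppAntidiag_nat_eq_choose, hr, ← Nat.choose_symm_add]
  congr 1
  omega

/-- The set of nonnegative integer vectors occurring in the count. -/
def Mset (S : Finset ι) (s : ℕ) (z : ℤ) (t : ℕ) : Set (ι → ℕ) :=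
  {m | (∀ i, i ∉ S → m i = 0) ∧ (s : ℤ) * (∑ i, (m i : ℤ)) + z = t}

lemma Mset_eq (S : Finset ι) (s : ℕ) (hs : 0 < s) (z : ℤ) (t : ℕ) (q : ℤ)
    (h : (t : ℤ) = s * q + z) :
    Mset S s z t = {m | (∀ i, i ∉ S → m i = 0) ∧ (∑ i, (m i : ℤ)) = q} := by
  ext m
  simp only [Mset, Set.mem_ofPred_eq, and_congr_right_iff]
  intro _
  rw [h]
  constructor
  · intro h'
    have : (s : ℤ) * (∑ i, (m i : ℤ)) = s * q := by linarith
    exact mul_left_cancel₀ (by positivity) this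
  · rintro rfl; rfl

lemma Mset_eq_nat (S : Finset ι) (q : ℕ) :
    {m : ι → ℕ | (∀ i, i ∉ S → m i = 0) ∧ (∑ i, (m i : ℤ)) = (q : ℤ)} = S.piAntidiag q := by
  ext m
  simp only [Set.mem_ofPred_eq, Finset.mem_coe, Finset.mem_piAntidiag]
  rw [and_comm]
  have hc : (∀ i, i ∉ S → m i = 0) ↔ ∀ i, m i ≠ 0 → i ∈ S :=
    forall_congr' fun i => by tauto
  rw [hc]
  apply and_congr_left
  intro hm
  have : S.sum m = ∑ i, m i := by
    apply Finset.sum_subset (Finset.subset_univ _)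
    intro i _ hi
    by_contra h
    exact hi (hm i h)
  rw [this]
  exact_mod_cast Iff.rfl

lemma Mset_finite (S : Finset ι) (s : ℕ) (hs : 0 < s) (z : ℤ) (t : ℕ) :
    (Mset S s z t).Finite := by
  by_cases h : ∃ q : ℕ, (t : ℤ) = s * q + z
  · obtain ⟨q, hq⟩ := h
    rw [Mset_eq S s hs z t q hq, Mset_eq_nat]
    exact Finset.finite_toSet _
  · convert Set.finite_empty
    rw [Set.eq_empty_iff_forall_notMem]
    intro m hm
    exact h ⟨∑ i, m i, by push_cast; exact hm.2.symm⟩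

lemma Mset_poly (S : Finset ι) (s : ℕ) (hs : 0 < s) (z : ℤ) (hz : z ≤ s * S.card) (j d : ℕ)
    (hd : S.card ≤ d + 1) :
    ∃ p : ℚ[X], p.degree ≤ d ∧
      ∀ t : ℕ, 0 < t → t % s = j → (S = ∅ → z = 0) →
        p.eval (t : ℚ) = (Mset S s z t).ncard := by
  by_cases hS : S = ∅
  · refine ⟨0, by simp, fun t ht _ h => ?_⟩
    have : Mset S s z t = ∅ := by
      rw [Set.eq_empty_iff_forall_notMem]
      intro m hm
      have h1 : ∀ i, m i = 0 := fun i => hm.1 i (by simp [hS])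
      have h2 := hm.2
      simp only [h1, h hS] at h2
      simp at h2
      omega
    simp [this]
  by_cases hj : (s : ℤ) ∣ (j : ℤ) - z
  swap
  · refine ⟨0, by simp, fun t ht htj _ => ?_⟩
    have : Mset S s z t = ∅ := by
      rw [Set.eq_empty_iff_forall_notMem]
      intro m hm
      apply hj
      have h2 := hm.2
      have h3 : (t : ℤ) = s * (t / s : ℕ) + j := by
        rw [← htj]; exact_mod_cast (Nat.div_add_mod t s).symm
      refine ⟨(∑ i, (m i : ℤ)) - (t / s : ℕ), ?_⟩
      rw [mul_sub]
      linarith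
    simp [this]
  obtain ⟨r, hr⟩ : ∃ r, S.card = r + 1 :=
    ⟨S.card - 1, by have := Finset.card_pos.2 (Finset.nonempty_iff_ne_empty.2 hS); omega⟩
  have hs' : (s : ℚ) ≠ 0 := by positivity
  refine ⟨C ((r.factorial : ℚ)⁻¹) * (descPochhammer ℚ r).comp
    (C ((s : ℚ)⁻¹) * X + C ((r : ℚ) - (z : ℚ) / s)), ?_, ?_⟩
  · rw [← Polynomial.natDegree_le_iff_degree_le]
    refine (Polynomial.natDegree_C_mul_le _ _).trans ?_
    refine Polynomial.natDegree_comp_le.trans ?_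
    rw [descPochhammer_natDegree]
    have := Polynomial.natDegree_linear_le (a := (s : ℚ)⁻¹) (b := (r : ℚ) - (z : ℚ) / s)
    calc _ ≤ r * 1 := Nat.mul_le_mul_left _ this
      _ ≤ d := by omega
  · intro t ht htj _
    have h3 : (t : ℤ) = s * (t / s : ℕ) + j := by
      rw [← htj]; exact_mod_cast (Nat.div_add_mod t s).symm
    obtain ⟨q, hq⟩ : ∃ q : ℤ, (t : ℤ) = s * q + z := by
      obtain ⟨e, he⟩ := hj
      exact ⟨(t / s : ℕ) + e, by rw [mul_add]; linarith⟩
    have hqr : 0 ≤ q + r := by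
      have h5 : (0 : ℤ) < s * (q + (r + 1)) := by
        rw [hr] at hz; push_cast at hz
        have : (0 : ℤ) < t := by exact_mod_cast ht
        nlinarith
      have := (mul_pos_iff_of_pos_left (by positivity : (0 : ℤ) < s)).1 h5
      omega
    obtain ⟨a, ha⟩ := Int.eq_ofNat_of_zero_le hqr
    have hcard : (Mset S s z t).ncard = a.choose r := by
      rw [Mset_eq S s hs z t q hq]
      rcases lt_or_ge q 0 with hq0 | hq0
      · have : {m : ι → ℕ | (∀ i, i ∉ S → m i = 0) ∧ (∑ i, (m i : ℤ)) = q} = ∅ := by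
          rw [Set.eq_empty_iff_forall_notMem]
          intro m hm
          have : (0 : ℤ) ≤ ∑ i, (m i : ℤ) := Finset.sum_nonneg fun i _ => by positivity
          have := hm.2
          omega
        rw [this, Set.ncard_empty, Nat.choose_eq_zero_of_lt (by omega)]
      · obtain ⟨q', rfl⟩ := Int.eq_ofNat_of_zero_le hq0
        rw [Mset_eq_nat, Set.ncard_coe_finset, card_piAntidiag_nat S q' r hr]
        congr 1
        omega
    rw [hcard, Nat.cast_choose_eq_descPochhammer_div]
    have hev : (s : ℚ)⁻¹ * t + (r - z / s) = a := by
      have h6 : (t : ℚ) = s * q + z := by exact_mod_cast hq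
      have h7 : (q : ℚ) + r = a := by exact_mod_cast ha
      rw [← h7, h6]; field_simp; ring
    simp only [eval_mul, eval_C, eval_comp, eval_add, eval_X, hev]
    rw [div_eq_inv_mul]

end counting

section assembly
variable {ι : Type*} [Fintype ι] {n : ℕ}

/-- Good coefficient vectors representing lattice points of the `t`-th dilate. -/
def Aset (w : ι → Fin n → ℤ) (s t : ℕ) : Set (ι → ℝ) :=
  {c | (∀ i, 0 ≤ c i) ∧ good w c ∧ (s : ℝ) * ∑ i, c i = t ∧
    ∀ k, ∃ m : ℤ, ∑ i, c i * w i k = m}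

/-- Good coefficient vectors in the unit box. -/
def Fset (w : ι → Fin n → ℤ) (s : ℕ) : Set (ι → ℝ) :=
  {f | (∀ i, 0 ≤ f i) ∧ (∀ i, f i ≤ 1) ∧ good w f ∧ (∃ z : ℤ, (s : ℝ) * ∑ i, f i = z) ∧
    ∀ k, ∃ m : ℤ, ∑ i, f i * w i k = m}

lemma Fset_finite (w : ι → Fin n → ℤ) (s : ℕ) (hs : 0 < s) : (Fset w s).Finite := by
  have hs' : (s : ℝ) ≠ 0 := by positivity
  let B : Fin n → ℤ := fun k => ∑ i, |w i k|
  let box : Set ((Fin n → ℤ) × ℤ) := Set.Icc (-B) B ×ˢ Set.Icc 0 ((s : ℤ) * Fintype.card ι)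
  have hbox : box.Finite := (Set.finite_Icc _ _).prod (Set.finite_Icc _ _)
  refine Set.Finite.of_injOn (f := fun f => Lm w f)
    (t := (fun v : (Fin n → ℤ) × ℤ => ((re v.1, (v.2 : ℝ) / s) : (Fin n → ℝ) × ℝ)) '' box)
    ?_ ?_ (hbox.image _)
  · rintro f ⟨h0, h1, hg, ⟨z, hz⟩, hm⟩
    choose m hm using hm
    refine ⟨(m, z), ⟨?_, ?_⟩, ?_⟩
    · have habs : ∀ k, |m k| ≤ B k := by
        intro k
        have : |(m k : ℝ)| ≤ (B k : ℝ) := by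
          rw [← hm k]
          refine (Finset.abs_sum_le_sum_abs _ _).trans ?_
          simp only [B]
          push_cast
          apply Finset.sum_le_sum
          intro i _
          rw [abs_mul, abs_of_nonneg (h0 i)]
          exact mul_le_of_le_one_left (abs_nonneg _) (h1 i)
        exact_mod_cast this
      exact ⟨fun k => (abs_le.1 (habs k)).1, fun k => (abs_le.1 (habs k)).2⟩
    · constructor
      · have : (0 : ℝ) ≤ z := by
          rw [← hz]
          exact mul_nonneg (by positivity) (Finset.sum_nonneg fun i _ => h0 i)
        exact_mod_cast this
      · have : (z : ℝ) ≤ s * Fintype.card ι := by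
          rw [← hz]
          apply mul_le_mul_of_nonneg_left _ (by positivity)
          refine (Finset.sum_le_sum (fun i _ => h1 i)).trans ?_
          simp
        exact_mod_cast this
    · refine Prod.ext ?_ ?_
      · ext k
        simp only [re]
        rw [Lm_fst, hm]
      · simp only
        rw [Lm_snd, ← hz]
        field_simp
  · intro f hf f' hf' h
    exact eq_of_good w f f' hf.1 hf'.1 hf.2.2.1 hf'.2.2.1 h

/-- The support. -/
noncomputable def supp (f : ι → ℝ) : Finset ι := by
  classical exact Finset.univ.filter (fun i => f i ≠ 0)

lemma mem_supp (f : ι → ℝ) (i : ι) : i ∈ supp f ↔ f i ≠ 0 := by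
  simp [supp]

/-- The height (times `s`) of a box vector. -/
noncomputable def zf (w : ι → Fin n → ℤ) (s : ℕ) (f : Fset w s) : ℤ := f.2.2.2.2.1.choose

lemma zf_spec (w : ι → Fin n → ℤ) (s : ℕ) (f : Fset w s) :
    (s : ℝ) * ∑ i, f.1 i = zf w s f := f.2.2.2.2.1.choose_spec

lemma box_le (f f' : ℝ) (m m' : ℕ) (h0 : 0 ≤ f') (h1 : f ≤ 1)
    (hm' : f' = 0 → m' = 0) (h : f + m = f' + m') : m' ≤ m := by
  by_contra! hlt
  have h2 : (m : ℝ) + 1 ≤ m' := by exact_mod_cast hlt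
  have h3 : f' = 0 := by linarith
  have := hm' h3
  omega

lemma Aset_equiv (w : ι → Fin n → ℤ) (s t : ℕ) :
    Nonempty ((Σ f : Fset w s, Mset (supp f.1) s (zf w s f) t) ≃ Aset w s t) := by
  have hmem : ∀ x : (Σ f : Fset w s, Mset (supp f.1) s (zf w s f) t),
      (fun i => x.1.1 i + (x.2.1 i : ℝ)) ∈ Aset w s t := by
    rintro ⟨f, m, hm⟩
    have hm0 : ∀ i, f.1 i = 0 → m i = 0 := fun i hi => hm.1 i (by simp [mem_supp, hi])
    refine ⟨fun i => add_nonneg (f.2.1 i) (by positivity), ?_, ?_, ?_⟩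
    · refine (good_congr w _ f.1 fun i => ?_).2 f.2.2.2.1
      constructor
      · intro h
        have := f.2.1 i
        have h' : (0 : ℝ) ≤ m i := by positivity
        simp only at h
        linarith
      · intro h
        simp [h, hm0 i h]
    · simp only
      rw [Finset.sum_add_distrib, mul_add, zf_spec]
      have := hm.2
      have h' : (s : ℝ) * (∑ i, (m i : ℝ)) + zf w s f = t := by exact_mod_cast this
      linarith
    · intro k
      obtain ⟨a, ha⟩ := f.2.2.2.2.2 k
      refine ⟨a + ∑ i, (m i : ℤ) * w i k, ?_⟩
      simp only [add_mul, Finset.sum_add_distrib]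
      push_cast
      rw [ha]
  refine ⟨Equiv.ofBijective (fun x => ⟨_, hmem x⟩) ⟨?_, ?_⟩⟩
  · rintro ⟨f, m, hm⟩ ⟨f', m', hm'⟩ h
    have hm0 : ∀ i, f.1 i = 0 → m i = 0 := fun i hi => hm.1 i (by simp [mem_supp, hi])
    have hm0' : ∀ i, f'.1 i = 0 → m' i = 0 := fun i hi => hm'.1 i (by simp [mem_supp, hi])
    have h' : ∀ i, f.1 i + (m i : ℝ) = f'.1 i + m' i := fun i =>
      congrFun (Subtype.ext_iff.1 h) i
    have hmm : m = m' := by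
      ext i
      exact le_antisymm
        (box_le _ _ _ _ (f.2.1 i) (f'.2.2.1 i) (hm0 i) (h' i).symm)
        (box_le _ _ _ _ (f'.2.1 i) (f.2.2.1 i) (hm0' i) (h' i))
    subst hmm
    have hff : f = f' := by
      apply Subtype.ext
      ext i
      have := h' i
      linarith
    subst hff
    rfl
  · rintro ⟨c, h0, hg, hsum, hZk⟩
    let m : ι → ℕ := fun i => ⌈c i⌉₊ - 1
    let f : ι → ℝ := fun i => c i - m i
    have hm : ∀ i, (c i = 0 ∧ m i = 0 ∧ f i = 0) ∨ (0 < f i ∧ f i ≤ 1 ∧ c i ≠ 0) := by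
      intro i
      rcases (h0 i).eq_or_lt with h | h
      · left
        have : m i = 0 := by simp [m, ← h]
        exact ⟨h.symm, this, by simp [f, this, ← h]⟩
      · right
        have h1 : 0 < ⌈c i⌉₊ := Nat.ceil_pos.2 h
        have h2 : (m i : ℝ) = (⌈c i⌉₊ : ℝ) - 1 := by
          simp only [m]; rw [Nat.cast_sub h1]; simp
        have h3 := Nat.le_ceil (c i)
        have h4 := Nat.ceil_lt_add_one h.le
        refine ⟨?_, ?_, h.ne'⟩
        · simp only [f, h2]; linarith
        · simp only [f, h2]; linarith
    have hsumf : ∑ i, f i = ∑ i, c i - ∑ i, (m i : ℝ) := by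
      simp [f, Finset.sum_sub_distrib]
    have hF : f ∈ Fset w s := by
      refine ⟨fun i => ?_, fun i => ?_, ?_, ?_, ?_⟩
      · rcases hm i with h | h
        · exact h.2.2.ge
        · exact h.1.le
      · rcases hm i with h | h
        · rw [h.2.2]; exact zero_le_one
        · exact h.2.1
      · refine (good_congr w _ _ fun i => ?_).1 hg
        rcases hm i with h | h
        · simp [h.1, h.2.2]
        · simp [h.2.2, h.1.ne']
      · refine ⟨t - s * ∑ i, (m i : ℤ), ?_⟩
        rw [hsumf, mul_sub, hsum]
        push_cast
        rfl
      · intro k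
        obtain ⟨a, ha⟩ := hZk k
        refine ⟨a - ∑ i, (m i : ℤ) * w i k, ?_⟩
        simp only [f, sub_mul, Finset.sum_sub_distrib]
        push_cast
        rw [ha]
    refine ⟨⟨⟨f, hF⟩, ⟨m, ?_, ?_⟩⟩, ?_⟩
    · intro i hi
      rcases hm i with h | h
      · exact h.2.1
      · exact absurd ((mem_supp _ _).2 h.1.ne') hi
    · have := zf_spec w s ⟨f, hF⟩
      simp only at this
      rw [hsumf, mul_sub, hsum] at this
      have h' : (s : ℝ) * ∑ i, (m i : ℝ) + zf w s ⟨f, hF⟩ = t := by linarith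
      exact_mod_cast h'
    · apply Subtype.ext
      ext i
      simp [f]

lemma Aset_finite (w : ι → Fin n → ℤ) (s t : ℕ) (hs : 0 < s) : (Aset w s t).Finite := by
  classical
  have := (Fset_finite w s hs).to_subtype
  have : ∀ f : Fset w s, Finite (Mset (supp f.1) s (zf w s f) t) :=
    fun f => (Mset_finite _ s hs _ t).to_subtype
  obtain ⟨e⟩ := Aset_equiv w s t
  have := Finite.of_equiv _ e
  exact Set.toFinite _

lemma Aset_poly (w : ι → Fin n → ℤ) (s : ℕ) (hs : 0 < s) (j d : ℕ)
    (hd : Module.finrank ℝ (vectorSpan ℝ (Set.range fun i => (s : ℝ)⁻¹ • re (w i))) = d) :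
    ∃ p : ℚ[X], p.degree ≤ d ∧
      ∀ t : ℕ, 0 < t → t % s = j → p.eval (t : ℚ) = (Aset w s t).ncard := by
  classical
  have := (Fset_finite w s hs).to_subtype
  have := Fintype.ofFinite (Fset w s)
  have hpos : ∀ f : Fset w s, zf w s f ≤ s * (supp f.1).card := by
    intro f
    have : (zf w s f : ℝ) ≤ s * (supp f.1).card := by
      rw [← zf_spec]
      apply mul_le_mul_of_nonneg_left _ (by positivity)
      have h1 : ∑ i, f.1 i = ∑ i ∈ supp f.1, f.1 i := by
        symm
        apply Finset.sum_subset (Finset.subset_univ _)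
        intro i _ hi
        simpa [mem_supp] using hi
      rw [h1]
      refine (Finset.sum_le_sum (fun i _ => f.2.2.1 i)).trans ?_
      simp
    exact_mod_cast this
  have hemp : ∀ f : Fset w s, supp f.1 = ∅ → zf w s f = 0 := by
    intro f hf
    have h1 : ∀ i, f.1 i = 0 := by
      intro i
      have : i ∉ supp f.1 := by simp [hf]
      simpa [mem_supp] using this
    have := zf_spec w s f
    simp only [h1, Finset.sum_const_zero, mul_zero] at this
    exact_mod_cast this.symm
  have hcard : ∀ f : Fset w s, (supp f.1).card ≤ d + 1 := by
    intro f
    rw [← hd]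
    convert card_good w s hs f.1 f.2.2.2.1
    ext i; simp [mem_supp]
  choose p hp1 hp2 using fun f : Fset w s =>
    Mset_poly (supp f.1) s hs (zf w s f) (hpos f) j d (hcard f)
  refine ⟨∑ f, p f, ?_, ?_⟩
  · refine (Polynomial.degree_sum_le _ _).trans ?_
    exact Finset.sup_le fun f _ => hp1 f
  · intro t ht htj
    have : ∀ f : Fset w s, Finite (Mset (supp f.1) s (zf w s f) t) :=
      fun f => (Mset_finite _ s hs _ t).to_subtype
    obtain ⟨e⟩ := Aset_equiv w s t
    rw [← Nat.card_coe_set_eq, ← Nat.card_congr e, Nat.card_sigma, Polynomial.eval_finsetSum]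
    push_cast
    apply Finset.sum_congr rfl
    intro f _
    rw [hp2 f t ht htj (hemp f), Nat.card_coe_set_eq]

end assembly

section final
variable {ι : Type*} [Fintype ι] {n : ℕ}

lemma mem_hull (u : ι → Fin n → ℝ) (x : Fin n → ℝ) :
    x ∈ convexHull ℝ (Set.range u) ↔
      ∃ c : ι → ℝ, (∀ i, 0 ≤ c i) ∧ ∑ i, c i = 1 ∧ ∑ i, c i • u i = x := by
  classical
  constructor
  · intro hx
    let g : (ι → ℝ) →ₗ[ℝ] (Fin n → ℝ) := Fintype.linearCombination ℝ u
    have hsub : convexHull ℝ (Set.range u) ⊆ g '' stdSimplex ℝ ι := by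
      apply convexHull_min
      · rintro _ ⟨i, rfl⟩
        exact ⟨Pi.single i 1, single_mem_stdSimplex ℝ i, by simp [g]⟩
      · exact (convex_stdSimplex ℝ ι).linear_image g
    obtain ⟨c, hc, rfl⟩ := hsub hx
    exact ⟨c, hc.1, hc.2, by simp [g, Fintype.linearCombination_apply]⟩
  · rintro ⟨c, h0, h1, rfl⟩
    exact (convex_convexHull ℝ _).sum_mem (fun i _ => h0 i) h1
      (fun i _ => subset_convexHull ℝ _ ⟨i, rfl⟩)

lemma mem_dilate (w : ι → Fin n → ℤ) (s t : ℕ) (hs : 0 < s) (ht : 0 < t) (x : Fin n → ℝ) :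
    x ∈ (t : ℝ) • convexHull ℝ (Set.range fun i => (s : ℝ)⁻¹ • re (w i)) ↔
      ∃ c : ι → ℝ, (∀ i, 0 ≤ c i) ∧ (s : ℝ) * ∑ i, c i = t ∧ (Lm w c).1 = x := by
  have hs' : (s : ℝ) ≠ 0 := by positivity
  have ht' : (t : ℝ) ≠ 0 := by positivity
  constructor
  · rintro ⟨y, hy, rfl⟩
    obtain ⟨c, h0, h1, rfl⟩ := (mem_hull _ _).1 hy
    refine ⟨fun i => t / s * c i, fun i => mul_nonneg (by positivity) (h0 i), ?_, ?_⟩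
    · rw [← Finset.mul_sum, h1]; field_simp
    · ext k
      rw [Lm_fst]
      simp only [Pi.smul_apply, Finset.sum_apply, smul_eq_mul, re, Finset.mul_sum]
      apply Finset.sum_congr rfl
      intro i _
      field_simp
  · rintro ⟨c, h0, h1, rfl⟩
    refine ⟨∑ i, (s / t * c i) • ((s : ℝ)⁻¹ • re (w i)), (mem_hull _ _).2
      ⟨_, fun i => mul_nonneg (by positivity) (h0 i), ?_, rfl⟩, ?_⟩
    · rw [← Finset.mul_sum, div_mul_eq_mul_div, h1]; field_simp
    · ext k
      rw [Lm_fst]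
      simp only [Pi.smul_apply, Finset.sum_apply, smul_eq_mul, re, Finset.mul_sum]
      apply Finset.sum_congr rfl
      intro i _
      field_simp

lemma lattice_eq_image (w : ι → Fin n → ℤ) (s t : ℕ) (hs : 0 < s) (ht : 0 < t) :
    {x ∈ (t : ℝ) • convexHull ℝ (Set.range fun i => (s : ℝ)⁻¹ • re (w i)) |
      ∀ i, ∃ m : ℤ, x i = m} = (fun c => (Lm w c).1) '' Aset w s t := by
  ext x
  constructor
  · rintro ⟨hx, hZk⟩
    obtain ⟨c, h0, h1, rfl⟩ := (mem_dilate w s t hs ht x).1 hx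
    obtain ⟨c', h0', hL, hg⟩ := exists_good w c h0
    refine ⟨c', ⟨h0', hg, ?_, fun k => ?_⟩, by simp only [hL]⟩
    · rw [← Lm_snd w, hL, Lm_snd, h1]
    · rw [← Lm_fst, hL]; exact hZk k
  · rintro ⟨c, ⟨h0, hg, h1, hZk⟩, rfl⟩
    refine ⟨(mem_dilate w s t hs ht _).2 ⟨c, h0, h1, rfl⟩, fun k => ?_⟩
    simp only [Lm_fst]
    exact hZk k

lemma latticeCount_eq (w : ι → Fin n → ℤ) (s t : ℕ) (hs : 0 < s) (ht : 0 < t) :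
    latticeCount ((t : ℝ) • convexHull ℝ (Set.range fun i => (s : ℝ)⁻¹ • re (w i))) =
      (Aset w s t).ncard := by
  rw [latticeCount, lattice_eq_image w s t hs ht]
  apply Set.ncard_image_of_injOn
  intro c hc c' hc' h
  refine eq_of_good w c c' hc.1 hc'.1 hc.2.1 hc'.2.1 (Prod.ext h ?_)
  rw [Lm_snd, Lm_snd]
  have hs' : (s : ℝ) ≠ 0 := by positivity
  exact mul_left_cancel₀ hs' (hc.2.2.1.trans hc'.2.2.1.symm)

lemma lower_bound [Nonempty ι] (w : ι → Fin n → ℤ) (s k d : ℕ) (hs : 0 < s) (hk : 0 < k)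
    (hd : Module.finrank ℝ (vectorSpan ℝ (Set.range fun i => (s : ℝ)⁻¹ • re (w i))) = d) :
    k ^ d ≤ d.factorial *
      latticeCount (((s * k : ℕ) : ℝ) •
        convexHull ℝ (Set.range fun i => (s : ℝ)⁻¹ • re (w i))) := by
  classical
  have hs' : (s : ℝ) ≠ 0 := by positivity
  have hk' : (k : ℝ) ≠ 0 := by positivity
  obtain ⟨T, hTsub, hTspan, hT⟩ := exists_affineIndependent ℝ (Fin n → ℝ)
    (Set.range fun i => (s : ℝ)⁻¹ • re (w i))
  have hTfin : T.Finite := (Set.finite_range _).subset hTsub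
  have := hTfin.fintype
  have hTne : T.Nonempty := by
    rw [← affineSpan_nonempty ℝ, hTspan, affineSpan_nonempty]
    exact Set.range_nonempty _
  have := hTne.to_subtype
  have hcardT : Fintype.card T = d + 1 := by
    obtain ⟨m, hm⟩ : ∃ m, Fintype.card T = m + 1 :=
      ⟨Fintype.card T - 1, by have := Fintype.card_pos (α := T); omega⟩
    have h1 := hT.finrank_vectorSpan hm
    rw [Subtype.range_coe, ← direction_affineSpan, hTspan, direction_affineSpan, hd] at h1
    omega
  let LX := {x ∈ ((s * k : ℕ) : ℝ) • convexHull ℝ (Set.range fun i => (s : ℝ)⁻¹ • re (w i)) |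
      ∀ i, ∃ m : ℤ, x i = m}
  have hXfin : LX.Finite := by
    simp only [LX]
    rw [lattice_eq_image w s (s * k) hs (by positivity)]
    exact (Aset_finite w s (s * k) hs).image _
  let φ : (T → ℕ) → (Fin n → ℝ) := fun m => ∑ x, (m x : ℝ) • ((s : ℝ) • x.1)
  have hcount : ((Finset.univ : Finset T).piAntidiag k : Set (T → ℕ)).ncard ≤ LX.ncard := by
    refine Set.ncard_le_ncard_of_injOn φ ?_ ?_ hXfin
    · intro m hm
      have hsum : ∑ x, m x = k := (Finset.mem_piAntidiag.1 hm).1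
      have hsum' : ∑ x, (m x : ℝ) = k := by exact_mod_cast hsum
      constructor
      · refine ⟨∑ x, ((m x : ℝ) / k) • x.1, ?_, ?_⟩
        · refine (convex_convexHull ℝ _).sum_mem (fun i _ => by positivity) ?_
            (fun x _ => subset_convexHull ℝ _ (hTsub x.2))
          rw [← Finset.sum_div, hsum']
          field_simp
        · simp only [φ, Finset.smul_sum, smul_smul]
          apply Finset.sum_congr rfl
          intro x _
          congr 1
          push_cast
          field_simp
      · intro i
        have : ∀ x : T, ∃ a : ℤ, (s : ℝ) * x.1 i = a := by
          intro x
          obtain ⟨j, hj⟩ := hTsub x.2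
          refine ⟨w j i, ?_⟩
          rw [← hj]
          simp only [Pi.smul_apply, smul_eq_mul, re]
          field_simp
        choose a ha using this
        refine ⟨∑ x, (m x : ℤ) * a x, ?_⟩
        simp only [φ, Finset.sum_apply, Pi.smul_apply, smul_eq_mul]
        push_cast
        apply Finset.sum_congr rfl
        intro x _
        rw [ha]
    · intro m hm m' hm' h
      have hsum : ∑ x, (m x : ℝ) = k := by exact_mod_cast (Finset.mem_piAntidiag.1 hm).1
      have hsum' : ∑ x, (m' x : ℝ) = k := by exact_mod_cast (Finset.mem_piAntidiag.1 hm').1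
      have h1 := affineIndependent_iff.1 hT Finset.univ (fun x => (m x : ℝ) - m' x)
        (by rw [Finset.sum_sub_distrib, hsum, hsum', sub_self]) (by
          have h2 : (s : ℝ) • ∑ x : T, ((m x : ℝ) - m' x) • x.1 = φ m - φ m' := by
            simp only [φ, ← Finset.sum_sub_distrib, Finset.smul_sum, smul_smul, ← sub_smul]
            apply Finset.sum_congr rfl
            intro x _
            congr 1
            ring
          rw [h, sub_self] at h2
          exact (smul_eq_zero.1 h2).resolve_left hs')
      ext x
      have := h1 x (Finset.mem_univ x)
      have h3 : (m x : ℝ) = m' x := by linarith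
      exact_mod_cast h3
  rw [Set.ncard_coe_finset, card_piAntidiag_nat _ k d (by simpa using hcardT)] at hcount
  calc k ^ d ≤ (k + 1) ^ d := Nat.pow_le_pow_left (by omega) d
    _ ≤ (k + 1).ascFactorial d := Nat.pow_succ_le_ascFactorial _ _
    _ = d.factorial * (k + d).choose d := Nat.ascFactorial_eq_factorial_mul_choose _ _
    _ ≤ _ := Nat.mul_le_mul_left _ hcount

lemma degree_eq (p : ℚ[X]) (s d : ℕ) (hs : 0 < s) (hp : p.degree ≤ d)
    (h : ∀ k : ℕ, 0 < k → (k : ℚ) ^ d ≤ d.factorial * p.eval ((s * k : ℕ) : ℚ)) :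
    p.degree = d := by
  by_contra hne
  have hlt : p.degree < (X ^ d : ℚ[X]).degree := by
    rw [degree_X_pow]; exact lt_of_le_of_ne hp hne
  have h1 := Polynomial.div_tendsto_atTop_zero_of_degree_lt p (X ^ d) hlt
  have h2 : Filter.Tendsto (fun k : ℕ => ((s * k : ℕ) : ℚ)) Filter.atTop Filter.atTop :=
    tendsto_natCast_atTop_atTop.comp (Filter.tendsto_id.const_mul_atTop' hs)
  have h3 := h1.comp h2
  have hpos : (0 : ℚ) < 1 / (d.factorial * (s : ℚ) ^ d) := by positivity
  have h4 := (h3.eventually (gt_mem_nhds hpos)).and (Filter.eventually_gt_atTop 0)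
  obtain ⟨k, hk, hk0⟩ := h4.exists
  have hk1 := h k hk0
  have hk' : (0 : ℚ) < k := by exact_mod_cast hk0
  have hs' : (0 : ℚ) < s := by exact_mod_cast hs
  simp only [Function.comp, eval_pow, eval_X] at hk
  rw [div_lt_div_iff₀ (by push_cast; positivity) (by positivity)] at hk
  push_cast at hk hk1
  rw [mul_pow] at hk
  have hsd : (0 : ℚ) < (s : ℚ) ^ d := by positivity
  nlinarith [mul_le_mul_of_nonneg_right hk1 hsd.le]

end final

end Ehrhart

theorem stmt18 (n d : ℕ) (V : Finset (Fin n → ℚ)) (hV : V.Nonempty)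
    (P : Set (Fin n → ℝ))
    (hP : P = convexHull ℝ ((fun (v : Fin n → ℚ) (i : Fin n) => (v i : ℝ)) '' V))
    (hd : Module.finrank ℝ (affineSpan ℝ P).direction = d)
    (s : ℕ) (hs : 0 < s) (hsint : IsIntegralPolytope ((s : ℝ) • P))
    (hsmin : ∀ s' : ℕ, 0 < s' → s' < s → ¬ IsIntegralPolytope ((s' : ℝ) • P)) :
    ∃ p : ℕ → Polynomial ℚ,
      (∀ j < s, (p j).degree ≤ d) ∧
      (∀ t : ℕ, 0 < t → (p (t % s)).eval (t : ℚ) = latticeCount ((t : ℝ) • P)) ∧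
      (∃ j < s, (p j).degree = d) := by
  have hs' : (s : ℝ) ≠ 0 := by positivity
  have hPne : P.Nonempty := by
    rw [hP, convexHull_nonempty_iff]
    exact (Finset.coe_nonempty.2 hV).image _
  obtain ⟨W, hW⟩ := hsint
  let w : {x // x ∈ W} → Fin n → ℤ := fun i => i.1
  have hPw : P = convexHull ℝ (Set.range fun i => (s : ℝ)⁻¹ • Ehrhart.re (w i)) := by
    have h1 : P = (s : ℝ)⁻¹ • ((s : ℝ) • P) := by rw [smul_smul, inv_mul_cancel₀ hs', one_smul]
    rw [h1, hW, ← convexHull_smul]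
    congr 1
    ext x
    constructor
    · rintro ⟨_, ⟨v, hv, rfl⟩, rfl⟩
      exact ⟨⟨v, hv⟩, rfl⟩
    · rintro ⟨v, rfl⟩
      exact ⟨_, ⟨v.1, v.2, rfl⟩, rfl⟩
  have hne : Nonempty {x // x ∈ W} := by
    rw [hPw, convexHull_nonempty_iff] at hPne
    exact Set.range_nonempty_iff_nonempty.1 hPne
  have hd' : Module.finrank ℝ
      (vectorSpan ℝ (Set.range fun i => (s : ℝ)⁻¹ • Ehrhart.re (w i))) = d := by
    rw [← hd, hPw, affineSpan_convexHull, direction_affineSpan]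
  choose p hp1 hp2 using fun j => Ehrhart.Aset_poly w s hs j d hd'
  have hp : ∀ t : ℕ, 0 < t →
      (p (t % s)).eval (t : ℚ) = latticeCount ((t : ℝ) • P) := by
    intro t ht
    rw [hp2 _ t ht rfl, hPw, Ehrhart.latticeCount_eq w s t hs ht]
  refine ⟨p, fun j _ => hp1 j, hp, 0, hs, ?_⟩
  apply Ehrhart.degree_eq (p 0) s d hs (hp1 0)
  intro k hk
  have h1 := hp (s * k) (by positivity)
  rw [Nat.mul_mod_right] at h1
  rw [h1, hPw]
  exact_mod_cast Ehrhart.lower_bound w s k d hs hk hd'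
end
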